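/- arXiv:math/0208078 — 2 statements merged into one kernel-verified Lean document; each statement's English description precedes it below -/
import Mathlib

section
/- Let k be a field of characteristic 0, and let S and R be integral domains that are finitely generated k-algebras, with R a k-subalgebra of S, such that R and S have the same transcendence degree over k. Let F : S → S be a k-algebra endomorphism with F(R) ⊆ R. If the restriction of F to R, viewed as a map R → R, is bijective, then F is bijective. -/
/-!
Let `L` be the fraction field of `S`. Equality of transcendence degrees makes `S` algebraic over
`R`, so a nonzero ideal of `S` meets `R` nontrivially, `F` is injective, and `F` extends to an
endomorphism `φ` of `L`. Since `L` is finite over `Frac R`, on which `φ` is bijective, `φ` is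
bijective as well.

The heart of the matter is the birational case (`dvd_of_map_dvd`): if `C → S` is a map of finitely
generated `k`-algebras compatible with an automorphism `g` of `C` and an endomorphism `F` of `S`,
then for `b, c ∈ C`, divisibility of `F c` by `F b` in `S` implies divisibility of `c` by `b`.
The data descend to finitely generated rings over `ℤ`. In such a ring, every ideal is an
intersection of ideals of finite index, so it is enough to show `c ∈ J` for every finite-index ideal
`J ∋ b` of `S`. There are only finitely many homomorphisms `C → S ⧸ J`, hence `gᵃ ≡ id` modulo `J`
for some `a ≥ 1`. Writing `F c = F b * s` gives `Fᵃ c = Fᵃ b * Fᵃ⁻¹ s`, that is,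
`c ≡ b * Fᵃ⁻¹ s ≡ 0` modulo `J`.

In general, let `C` be the integral closure of `R` in `L`, which is finite over `R` by Noether
normalization and separability, and let `T = S[C]`, which is a finite `S`-module. As `φ` restricts
to an automorphism of `C` and `L = Frac C`, the birational case gives `φ⁻¹(T) ⊆ T`. Therefore
`S ⊆ φ⁻¹(S) ⊆ φ⁻²(S) ⊆ ⋯` is an ascending chain of `S`-submodules of the Noetherian module `T`.
It stabilizes, and applying a power of `φ` yields `F(S) = S`.
-/

/-- The transcendence degree of a commutative `k`-algebra `A`: the supremum of the
cardinalities of algebraically independent subsets of `A` over `k`. -/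
noncomputable def trdeg (k A : Type*) [CommRing k] [CommRing A] [Algebra k A] : Cardinal :=
  ⨆ s : {s : Set A // AlgebraicIndependent k ((↑) : s → A)}, Cardinal.mk s.1

/-! ### Residual finiteness of finitely generated rings -/

theorem isJacobsonRing_int : IsJacobsonRing ℤ := by
  refine isJacobsonRing_iff_prime_eq.2 fun P hP => ?_
  by_cases h : P = ⊥
  · subst h
    refine le_antisymm (fun x hx => ?_) Ideal.le_jacobson
    have hu := Ideal.mem_jacobson_bot.1 hx x
    rw [Int.isUnit_iff] at hu
    rw [Ideal.mem_bot]
    rcases hu with h | h <;> nlinarith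
  · have := hP.isMaximal h
    exact Ideal.jacobson_eq_self_of_isMaximal

theorem finite_of_isField_of_finiteType_int (K : Type*) [CommRing K] (hK : IsField K)
    [hft : Algebra.FiniteType ℤ K] : Finite K := by
  have := isJacobsonRing_int
  have hfin : Module.Finite ℤ K := by
    let _ := hK.toField
    exact @finite_of_finite_type_of_isJacobsonRing ℤ K _ _ _ _ hft
  have hchar : ¬ Function.Injective (algebraMap ℤ K) := fun hinj =>
    Int.not_isField (isField_of_isIntegral_of_isField hinj hK)
  have : ∃ n : ℤ, n ≠ 0 ∧ algebraMap ℤ K n = 0 := by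
    by_contra! h
    exact hchar ((injective_iff_map_eq_zero _).2 fun a ha => by_contra fun h0 => h a h0 ha)
  obtain ⟨n, hn, h0⟩ := this
  refine Module.finite_of_fg_torsion K fun x => ⟨⟨n, mem_nonZeroDivisors_of_ne_zero hn⟩, ?_⟩
  change n • x = 0
  rw [Algebra.smul_def, h0, zero_mul]

/-- In a finitely generated ring, every ideal is an intersection of ideals of finite index: the
ideals `I + nⁱ` with `n` maximal suffice. -/
theorem exists_finite_quotient_notMem {A : Type*} [CommRing A] [Algebra.FiniteType ℤ A]
    (I : Ideal A) (c : A) (hc : c ∉ I) : ∃ J : Ideal A, I ≤ J ∧ c ∉ J ∧ Finite (A ⧸ J) := by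
  have : IsNoetherianRing A := Algebra.FiniteType.isNoetherianRing ℤ A
  let x : A ⧸ I := Ideal.Quotient.mk I c
  have hx : x ≠ 0 := fun h => hc (Ideal.Quotient.eq_zero_iff_mem.1 h)
  -- the colon ideal `(I : c)`
  let ann : Ideal A := LinearMap.ker (LinearMap.toSpanSingleton A (A ⧸ I) x)
  have hne : ann ≠ ⊤ := by
    intro h
    have : (1 : A) ∈ ann := h ▸ Submodule.mem_top
    simp [ann] at this
    exact hx this
  obtain ⟨n, hn, hle⟩ := Ideal.exists_le_maximal ann hne
  have hex : ∃ i : ℕ, x ∉ (n ^ i • ⊤ : Submodule A (A ⧸ I)) := by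
    by_contra! h
    -- Krull's intersection theorem
    obtain ⟨⟨r, hr⟩, hrx⟩ :=
      (Ideal.mem_iInf_smul_pow_eq_bot_iff n x).1 (Submodule.mem_iInf _ |>.2 h)
    have h1 : (1 - r) ∈ n := hle (by simpa [ann, sub_smul, sub_eq_zero] using hrx.symm)
    exact hn.ne_top ((Ideal.eq_top_iff_one _).2 (by simpa using n.add_mem h1 hr))
  obtain ⟨i, hi⟩ := hex
  have hfield : Finite (A ⧸ n) := by
    exact @finite_of_isField_of_finiteType_int (A ⧸ n) _
      ((Ideal.Quotient.maximal_ideal_iff_isField_quotient n).1 hn)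
      (Algebra.FiniteType.of_surjective (Ideal.Quotient.mk n).toIntAlgHom
        Ideal.Quotient.mk_surjective)
  have hpow : Finite (A ⧸ n ^ i) := Ideal.finite_quotient_pow (IsNoetherian.noetherian n) i
  refine ⟨I ⊔ n ^ i, le_sup_left, fun h => hi ?_, ?_⟩
  · obtain ⟨a, ha, b, hb, rfl⟩ := Submodule.mem_sup.1 h
    have : x = b • (1 : A ⧸ I) := by
      simp only [x, map_add, Ideal.Quotient.eq_zero_iff_mem.2 ha, zero_add, Algebra.smul_def,
        mul_one]
      rfl
    rw [this]
    exact Submodule.smul_mem_smul hb Submodule.mem_top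
  · exact Finite.of_surjective _
      (Ideal.Quotient.factor_surjective (le_sup_right : n ^ i ≤ I ⊔ n ^ i))

/-! ### The birational case -/

theorem finite_ringHom {C Q : Type*} [CommRing C] [CommRing Q] [Algebra.FiniteType ℤ C] [Finite Q] :
    Finite (C →+* Q) := by
  obtain ⟨s, hs⟩ := (Algebra.FiniteType.out : (⊤ : Subalgebra ℤ C).FG)
  refine Finite.of_injective (fun (f : C →+* Q) (x : s) => f x) fun f g h => ?_
  have : f.toIntAlgHom = g.toIntAlgHom := by
    refine AlgHom.ext_of_adjoin_eq_top hs fun x hx => ?_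
    exact congrFun h ⟨x, hx⟩
  ext x
  exact DFunLike.congr_fun this x

/-- The birational case over `ℤ`: modulo an ideal of finite index, the surjective endomorphism `g`
of `C` is periodic, and this periodicity propagates the divisibility `F b ∣ F c` back to
`b ∣ c`. -/
theorem dvd_of_map_dvd_int {C S : Type*} [CommRing C] [CommRing S] [Algebra.FiniteType ℤ C]
    [Algebra.FiniteType ℤ S] (i : C →+* S) (g : C →+* C) (hg : Function.Surjective g)
    (F : S →+* S) (hF : ∀ c, F (i c) = i (g c)) (b c : C) (h : F (i b) ∣ F (i c)) :
    i b ∣ i c := by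
  obtain ⟨s, hs⟩ := h
  rw [← Ideal.mem_span_singleton]
  by_contra hc
  obtain ⟨J, hJ, hcJ, hfin⟩ := exists_finite_quotient_notMem _ _ hc
  let p : C →+* S ⧸ J := (Ideal.Quotient.mk J).comp i
  have := finite_ringHom (C := C) (Q := S ⧸ J)
  obtain ⟨m, n, hmn, heq⟩ :=
    Finite.exists_ne_map_eq_of_infinite fun n : ℕ => p.comp (g ^ n)
  wlog hlt : m < n generalizing m n
  · exact this n m hmn.symm heq.symm (by omega)
  obtain ⟨a, rfl⟩ : ∃ a, n = (a + 1) + m := ⟨n - m - 1, by omega⟩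
  have hgm : Function.Surjective (g ^ m : C →+* C) := by
    rw [RingHom.coe_pow]; exact hg.iterate m
  -- surjectivity of `g ^ m` turns the coincidence of two iterates into pure periodicity
  have hper : ∀ x, p x = p (g^[a + 1] x) := by
    intro x
    obtain ⟨y, rfl⟩ := hgm x
    have := DFunLike.congr_fun heq y
    simp only [RingHom.comp_apply, RingHom.coe_pow, Function.iterate_add_apply] at this ⊢
    exact this
  have hFi : ∀ k x, F^[k] (i x) = i (g^[k] x) := by
    intro k x
    exact ((Function.Semiconj.iterate_right (f := i) (ga := g) (gb := F)
      (fun c => (hF c).symm) k) x).symm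
  have key : i (g^[a + 1] c) = i (g^[a + 1] b) * F^[a] s := by
    rw [← hFi, ← hFi, Function.iterate_succ_apply, Function.iterate_succ_apply, hs]
    exact iterate_map_mul F a _ _
  have hb : p b = 0 :=
    Ideal.Quotient.eq_zero_iff_mem.2 (hJ (Ideal.mem_span_singleton_self _))
  refine hcJ (Ideal.Quotient.eq_zero_iff_mem.1 ?_)
  change p c = 0
  rw [hper c]
  change Ideal.Quotient.mk J (i _) = 0
  rw [key, map_mul]
  change p _ * _ = 0
  rw [← hper b, hb, zero_mul]

/-- Spreading out: a finite set in a finitely generated `k`-algebra lies in a finitely generated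
subring stable under finitely many given endomorphisms. The subring is generated by `k`-algebra
generators together with the finitely many coefficients in `k` needed to express the given elements
and the images of the generators. -/
theorem exists_fg_stable_subring {k T ι : Type*} [Field k] [CommRing T] [Algebra k T]
    [Algebra.FiniteType k T] [Finite ι] (Φ : ι → T →ₐ[k] T) (X : Set T) (hX : X.Finite) :
    ∃ T₀ : Subalgebra ℤ T, T₀.FG ∧ X ⊆ T₀ ∧ ∀ j, ∀ t ∈ T₀, Φ j t ∈ T₀ := by
  obtain ⟨Y, hY⟩ := (Algebra.FiniteType.out : (⊤ : Subalgebra k T).FG)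
  let B : Set k → Subalgebra ℤ T := fun E => Algebra.adjoin ℤ (algebraMap k T '' E ∪ Y)
  have hmono : ∀ {E E'}, E ⊆ E' → B E ≤ B E' := fun h =>
    Algebra.adjoin_mono (Set.union_subset_union_left _ (Set.image_mono h))
  have hone : ∀ t : T, ∃ E : Set k, E.Finite ∧ t ∈ B E := by
    intro t
    have ht : t ∈ Algebra.adjoin k (Y : Set T) := hY ▸ Algebra.mem_top
    induction ht using Algebra.adjoin_induction with
    | mem x hx => exact ⟨∅, Set.finite_empty, Algebra.subset_adjoin (Or.inr hx)⟩
    | algebraMap r =>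
      exact ⟨{r}, Set.finite_singleton r, Algebra.subset_adjoin (Or.inl ⟨r, rfl, rfl⟩)⟩
    | add x y _ _ hx hy =>
      obtain ⟨E, hE, hx⟩ := hx
      obtain ⟨E', hE', hy⟩ := hy
      exact ⟨E ∪ E', hE.union hE', add_mem (hmono Set.subset_union_left hx)
        (hmono Set.subset_union_right hy)⟩
    | mul x y _ _ hx hy =>
      obtain ⟨E, hE, hx⟩ := hx
      obtain ⟨E', hE', hy⟩ := hy
      exact ⟨E ∪ E', hE.union hE', mul_mem (hmono Set.subset_union_left hx)
        (hmono Set.subset_union_right hy)⟩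
  choose E hE hmem using hone
  let Z : Set T := X ∪ ⋃ j, Φ j '' Y
  have hZ : Z.Finite := hX.union (Set.finite_iUnion fun j => Y.finite_toSet.image _)
  let E₀ : Set k := ⋃ z ∈ Z, E z
  have hE₀ : E₀.Finite := hZ.biUnion fun z _ => hE z
  have hsub : ∀ z ∈ Z, z ∈ B E₀ := fun z hz =>
    hmono (Set.subset_biUnion_of_mem (u := E) hz) (hmem z)
  refine ⟨B E₀, Subalgebra.fg_def.2 ⟨_, (hE₀.image _).union Y.finite_toSet, rfl⟩,
    fun x hx => hsub x (Or.inl hx), fun j => ?_⟩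
  have : B E₀ ≤ (B E₀).comap ((Φ j).restrictScalars ℤ) := by
    refine Algebra.adjoin_le ?_
    rintro _ (⟨e, he, rfl⟩ | hy)
    · change Φ j _ ∈ B E₀
      rw [AlgHom.commutes]
      exact Algebra.subset_adjoin (Or.inl ⟨e, he, rfl⟩)
    · exact hsub _ (Or.inr (Set.mem_iUnion.2 ⟨j, _, hy, rfl⟩))
  exact fun t ht => this ht

/-- The birational case over `k`, deduced from `dvd_of_map_dvd_int` by spreading out. -/
theorem dvd_of_map_dvd {k C S : Type*} [Field k] [CommRing C] [CommRing S] [Algebra k C]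
    [Algebra k S] [Algebra.FiniteType k C] [Algebra.FiniteType k S] (i : C →ₐ[k] S)
    (g : C ≃ₐ[k] C) (F : S →ₐ[k] S) (hF : ∀ c, F (i c) = i (g c)) (b c : C)
    (h : F (i b) ∣ F (i c)) : i b ∣ i c := by
  obtain ⟨s, hs⟩ := h
  obtain ⟨C₀, ⟨Y, hY⟩, hC, hgC⟩ := exists_fg_stable_subring
    (fun e : Bool => bif e then (g : C →ₐ[k] C) else (g.symm : C →ₐ[k] C)) {b, c}
    (by simp)
  obtain ⟨S₀, hS₀, hS, hFS⟩ := exists_fg_stable_subring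
    (fun _ : Unit => F) (insert s (i '' Y)) ((Y.finite_toSet.image _).insert _)
  have hi : ∀ x ∈ C₀, i x ∈ S₀ := by
    have : C₀ ≤ S₀.comap (i.restrictScalars ℤ) := by
      rw [← hY]
      exact Algebra.adjoin_le fun y hy => hS (Or.inr ⟨y, hy, rfl⟩)
    exact fun x hx => this hx
  have : Algebra.FiniteType ℤ C₀ := (Subalgebra.fg_iff_finiteType _).1 ⟨Y, hY⟩
  have : Algebra.FiniteType ℤ S₀ := (Subalgebra.fg_iff_finiteType _).1 hS₀
  have hg : ∀ x ∈ C₀, g x ∈ C₀ := hgC true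
  have hg' : ∀ x ∈ C₀, g.symm x ∈ C₀ := hgC false
  let i₀ : C₀ →+* S₀ := (i : C →+* S).restrict C₀ S₀ hi
  let g₀ : C₀ →+* C₀ := (g : C →+* C).restrict C₀ C₀ hg
  let F₀ : S₀ →+* S₀ := (F : S →+* S).restrict S₀ S₀ (hFS ())
  have hsurj : Function.Surjective g₀ := fun x =>
    ⟨⟨g.symm x, hg' x x.2⟩, Subtype.ext (g.apply_symm_apply x)⟩
  obtain ⟨z, hz⟩ := dvd_of_map_dvd_int i₀ g₀ hsurj F₀ (fun c => Subtype.ext (hF c))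
    ⟨b, hC (by simp)⟩ ⟨c, hC (by simp)⟩ ⟨⟨s, hS (by simp)⟩, Subtype.ext hs⟩
  exact ⟨z, congrArg Subtype.val hz⟩

/-! ### Algebraic extensions -/

theorem finiteDimensional_of_essFiniteType (A K L : Type*) [CommRing A] [IsDomain A] [Field K]
    [Field L] [Algebra A K] [IsFractionRing A K] [Algebra A L] [Algebra K L] [IsScalarTower A K L]
    [Algebra.IsAlgebraic A L] [Algebra.EssFiniteType A L] : FiniteDimensional K L := by
  have : Algebra.IsAlgebraic K L :=
    (IsFractionRing.comap_isAlgebraic_iff (A := A) (K := K) (C := L)).1 inferInstance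
  have : Algebra.EssFiniteType K L := Algebra.EssFiniteType.of_comp A K L
  exact Algebra.finite_of_essFiniteType_of_isAlgebraic

/-- The integral closure of an affine domain `R` in a finite extension of its fraction field is
finite over `R`: it is also the integral closure of a Noether normalization of `R`, which is
integrally closed, and the extension is separable in characteristic zero. -/
theorem finite_integralClosure (k R L : Type*) [Field k] [CharZero k] [CommRing R] [IsDomain R]
    [Field L] [Algebra k R] [Algebra k L] [Algebra R L] [IsScalarTower k R L]
    [FaithfulSMul R L] [Algebra.FiniteType k R] [Algebra.IsAlgebraic R L]
    [Algebra.EssFiniteType R L] : Module.Finite R (integralClosure R L) := by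
  obtain ⟨d, f, hinj, hfin⟩ := exists_finite_inj_algHom_of_fg k R
  let P := MvPolynomial (Fin d) k
  let _ : Algebra P R := f.toRingHom.toAlgebra
  let _ : Algebra P L := ((algebraMap R L).comp f.toRingHom).toAlgebra
  have : IsScalarTower P R L := IsScalarTower.of_algebraMap_eq fun _ => rfl
  have : Module.Finite P R := hfin
  have hR : Function.Injective (algebraMap R L) := FaithfulSMul.algebraMap_injective R L
  have hPL : Function.Injective (algebraMap P L) := hR.comp hinj
  have : FaithfulSMul P R := (faithfulSMul_iff_algebraMap_injective P R).2 hinj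
  have : FaithfulSMul P L := (faithfulSMul_iff_algebraMap_injective P L).2 hPL
  have : Algebra.IsAlgebraic P L := Algebra.IsAlgebraic.trans P R L
  have : Algebra.EssFiniteType P L := Algebra.EssFiniteType.comp P R L
  let K := FractionRing P
  let _ : Algebra K L := FractionRing.liftAlgebra P L
  have : IsScalarTower P K L := FractionRing.isScalarTower_liftAlgebra P L
  have : FiniteDimensional K L := finiteDimensional_of_essFiniteType P K L
  have : CharZero K := charZero_of_injective_algebraMap
    (IsFractionRing.injective P K)
  have : IsIntegralClosure (integralClosure R L) P L :=
    { algebraMap_injective := Subtype.val_injective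
      isIntegral_iff := fun {x} => by
        have hint : Algebra.IsIntegral P R := Algebra.IsIntegral.of_finite P R
        refine ⟨fun hx => ⟨⟨x, hx.tower_top⟩, rfl⟩, ?_⟩
        rintro ⟨⟨y, hy⟩, rfl⟩
        exact isIntegral_trans (R := P) (A := R) y hy }
  have : Module.Finite P (integralClosure R L) := IsIntegralClosure.finite P K L _
  exact Module.Finite.of_restrictScalars_finite P R _

theorem injective_of_algebraic {R S : Type*} [CommRing R] [CommRing S] [IsDomain S]
    [Algebra R S] [FaithfulSMul R S] [Algebra.IsAlgebraic R S] (g : R → R)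
    (hg : Function.Injective g) (F : S →+* S)
    (hF : ∀ r, F (algebraMap R S r) = algebraMap R S (g r)) : Function.Injective F := by
  have hinj := FaithfulSMul.algebraMap_injective R S
  have hg0 : g 0 = 0 := hinj (by rw [← hF]; simp)
  refine (injective_iff_map_eq_zero F).2 fun s hs => by_contra fun h0 => ?_
  obtain ⟨r, hr, t, ht⟩ := (Algebra.IsAlgebraic.isAlgebraic (R := R) s).exists_nonzero_dvd
    (mem_nonZeroDivisors_of_ne_zero h0)
  refine hr (hg (hinj ?_))
  rw [← hF, ht, map_mul, hs, zero_mul, hg0, map_zero]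

/-- An endomorphism of `L` inducing an automorphism of `R` is surjective when `L` is finite over
`Frac R`: the image of a basis is again a basis. -/
theorem surjective_of_semilinear {R L : Type*} [CommRing R] [IsDomain R] [Field L] [Algebra R L]
    [FaithfulSMul R L] [Algebra.IsAlgebraic R L] [Algebra.EssFiniteType R L] (g : R ≃+* R)
    (φ : L →+* L) (hφ : ∀ r, φ (algebraMap R L r) = algebraMap R L (g r)) :
    Function.Surjective φ := by
  let K := FractionRing R
  let _ : Algebra K L := FractionRing.liftAlgebra R L
  have : IsScalarTower R K L := FractionRing.isScalarTower_liftAlgebra R L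
  have : FiniteDimensional K L := finiteDimensional_of_essFiniteType R K L
  have hRφ : ∀ r, algebraMap R L r ∈ φ.fieldRange := fun r =>
    ⟨algebraMap R L (g.symm r), by rw [hφ, g.apply_symm_apply]⟩
  have hKφ : ∀ q, algebraMap K L q ∈ φ.fieldRange := by
    intro q
    obtain ⟨a, b, -, rfl⟩ := IsFractionRing.div_surjective (A := R) q
    rw [map_div₀, ← IsScalarTower.algebraMap_apply, ← IsScalarTower.algebraMap_apply]
    exact div_mem (hRφ a) (hRφ b)
  let v := Module.finBasis K L
  have hv : LinearIndependent R (φ ∘ v) := by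
    have hv0 : LinearIndependent R v :=
      (LinearIndependent.iff_fractionRing R K).2 v.linearIndependent
    rw [Fintype.linearIndependent_iff] at hv0 ⊢
    intro c hc j
    have := hv0 (fun j => g.symm (c j)) (φ.injective ?_) j
    · simpa using this
    · rw [map_zero, ← hc, map_sum]
      refine Finset.sum_congr rfl fun j _ => ?_
      rw [Algebra.smul_def, Algebra.smul_def, map_mul, hφ, g.apply_symm_apply]
      rfl
  have hspan := ((LinearIndependent.iff_fractionRing R K).1 hv).span_eq_top_of_card_eq_finrank'
    (by simp)
  intro x
  have hx : x ∈ Submodule.span K (Set.range (φ ∘ v)) := hspan ▸ Submodule.mem_top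
  change x ∈ φ.fieldRange
  induction hx using Submodule.span_induction with
  | mem x hx => obtain ⟨j, rfl⟩ := hx; exact ⟨_, rfl⟩
  | zero => exact zero_mem _
  | add x y _ _ hx hy => exact add_mem hx hy
  | smul q x _ hx => rw [Algebra.smul_def]; exact mul_mem (hKφ q) hx

theorem isAlgebraic_of_trdeg_eq {k S : Type*} [Field k] [CommRing S] [IsDomain S] [Algebra k S]
    [Algebra.FiniteType k S] (R : Subalgebra k S)
    (htr : trdeg k (FractionRing ↥R) = trdeg k (FractionRing S)) : Algebra.IsAlgebraic R S := by
  have hfrac : ∀ (A : Type _) [CommRing A] [IsDomain A] [Algebra k A],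
      trdeg k (FractionRing A) = Algebra.trdeg k A := by
    intro A _ _ _
    have h := trdeg_add_eq k A (A := FractionRing A)
    have : Algebra.IsAlgebraic A (FractionRing A) :=
      IsLocalization.isAlgebraic _ (nonZeroDivisors A)
    rw [trdeg_eq_zero (R := A), add_zero] at h
    exact h.symm
  rw [hfrac R, hfrac S] at htr
  have h := trdeg_add_eq k R (A := S)
  rw [htr] at h
  have hlt : Algebra.trdeg k S < Cardinal.aleph0 := trdeg_lt_aleph0_of_finiteType
  have h0 : Algebra.trdeg R S = 0 :=
    Cardinal.eq_of_add_eq_add_left (h.trans (add_zero _).symm) hlt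
  exact trdeg_eq_zero_iff.1 h0

/-! ### The general case -/

/-- Surjectivity of an injective endomorphism `F` of `S` that restricts to an automorphism `g` of
`R`, where `S` is algebraic over `R`. The field `L` is the fraction field of `S`. -/
theorem surjective_of_isAlgebraic {k R S L : Type*} [Field k] [CharZero k]
    [CommRing R] [IsDomain R] [CommRing S] [IsDomain S] [Field L] [Algebra k R] [Algebra k S]
    [Algebra k L] [Algebra R S] [Algebra R L] [Algebra S L] [IsScalarTower k R S]
    [IsScalarTower k R L] [IsScalarTower k S L] [IsScalarTower R S L] [IsFractionRing S L]
    [FaithfulSMul R S] [Algebra.FiniteType k R] [Algebra.FiniteType k S] [Algebra.IsAlgebraic R S]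
    (g : R ≃ₐ[k] R) (F : S →ₐ[k] S) (hFinj : Function.Injective F)
    (hF : ∀ r, F (algebraMap R S r) = algebraMap R S (g r)) : Function.Surjective F := by
  have hSL : Function.Injective (algebraMap S L) := IsFractionRing.injective S L
  have hRS : Function.Injective (algebraMap R S) := FaithfulSMul.algebraMap_injective R S
  have hRL : Function.Injective (algebraMap R L) := by
    rw [IsScalarTower.algebraMap_eq R S L]; exact hSL.comp hRS
  have : FaithfulSMul R L := (faithfulSMul_iff_algebraMap_injective R L).2 hRL
  have : Algebra.IsAlgebraic S L := IsLocalization.isAlgebraic _ (nonZeroDivisors S)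
  have : Algebra.IsAlgebraic R L := Algebra.IsAlgebraic.trans R S L
  have : Algebra.EssFiniteType R L := by
    have : Algebra.EssFiniteType S L :=
      Algebra.EssFiniteType.of_isLocalization L (nonZeroDivisors S)
    have : Algebra.EssFiniteType k L := Algebra.EssFiniteType.comp k S L
    exact Algebra.EssFiniteType.of_comp k R L
  -- the extension of `F` to the fraction field
  have hcomp : Function.Injective ((IsScalarTower.toAlgHom k S L).comp F) := hSL.comp hFinj
  obtain ⟨φ, hφS⟩ : ∃ φ : L →ₐ[k] L, ∀ s, φ (algebraMap S L s) = algebraMap S L (F s) :=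
    ⟨IsFractionRing.liftAlgHom hcomp, fun s => IsFractionRing.lift_algebraMap hcomp s⟩
  have hφR : ∀ r, φ (algebraMap R L r) = algebraMap R L (g r) := fun r => by
    rw [IsScalarTower.algebraMap_apply R S L, hφS, hF, ← IsScalarTower.algebraMap_apply]
  have hφ : Function.Bijective φ :=
    ⟨φ.toRingHom.injective, surjective_of_semilinear g.toRingEquiv φ.toRingHom hφR⟩
  let e : L ≃ₐ[k] L := AlgEquiv.ofBijective φ hφ
  -- `C` is the integral closure of `R` in `L`, on which `φ` is an automorphism
  let C : Subalgebra k L := (integralClosure R L).restrictScalars k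
  have hfin : Module.Finite R (integralClosure R L) := finite_integralClosure k R L
  have hCft : Algebra.FiniteType k C := by
    have : Algebra.FiniteType R (integralClosure R L) := inferInstance
    have : IsScalarTower k R (integralClosure R L) := IsScalarTower.of_algebraMap_eq fun x =>
      Subtype.ext (IsScalarTower.algebraMap_apply k R L x)
    have h : Algebra.FiniteType k (integralClosure R L) :=
      Algebra.FiniteType.trans (S := R) inferInstance inferInstance
    exact h
  have heC : ∀ x ∈ C, e x ∈ C := fun x (hx : IsIntegral R x) =>
    hx.map_of_comp_eq (g : R →+* R) (e : L →+* L) (RingHom.ext fun r => (hφR r).symm)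
  have heC' : ∀ x ∈ C, e.symm x ∈ C := fun x (hx : IsIntegral R x) =>
    hx.map_of_comp_eq (g.symm : R →+* R) (e.symm : L →+* L) (RingHom.ext fun r => by
      refine e.injective ?_
      change φ _ = e (e.symm _)
      rw [e.apply_symm_apply]
      exact (hφR _).trans (congrArg _ (g.apply_symm_apply r)))
  let gC : C ≃ₐ[k] C := AlgEquiv.ofAlgHom
    (((e : L →ₐ[k] L).comp C.val).codRestrict C fun x => heC x x.2)
    (((e.symm : L →ₐ[k] L).comp C.val).codRestrict C fun x => heC' x x.2)
    (AlgHom.ext fun x => Subtype.ext (e.apply_symm_apply x))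
    (AlgHom.ext fun x => Subtype.ext (e.symm_apply_apply x))
  -- `T` is the finite extension `S[C]` of `S`
  obtain ⟨X, hXfin, hXspan⟩ := Submodule.fg_def.1
    (Module.Finite.iff_fg.1 (show Module.Finite R (Subalgebra.toSubmodule (integralClosure R L))
      from hfin))
  let T : Subalgebra S L := Algebra.adjoin S X
  have hXC : ∀ x ∈ X, x ∈ C := fun x hx => by
    have : x ∈ Submodule.span R X := Submodule.subset_span hx
    rw [hXspan] at this
    exact this
  have hCT : ∀ x ∈ C, x ∈ T := fun x hx => by
    have hx' : x ∈ Submodule.span R X := by rw [hXspan]; exact hx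
    have hle : Submodule.span R X ≤ (Subalgebra.toSubmodule T).restrictScalars R :=
      Submodule.span_le.2 fun y hy => Algebra.subset_adjoin hy
    exact hle hx'
  have hTfg : (Subalgebra.toSubmodule T).FG := fg_adjoin_of_finite hXfin fun x hx =>
    IsIntegral.tower_top (R := R) (hXC x hx)
  have hTfin : Module.Finite S T := Module.Finite.iff_fg.2 hTfg
  have hSnoeth : IsNoetherianRing S := Algebra.FiniteType.isNoetherianRing k S
  have hTnoeth : IsNoetherian S (Subalgebra.toSubmodule T) :=
    isNoetherian_of_fg_of_noetherian _ hTfg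
  let Tk : Subalgebra k L := T.restrictScalars k
  have hTft : Algebra.FiniteType k Tk := by
    have : Algebra.FiniteType S T := inferInstance
    have : IsScalarTower k S T := IsScalarTower.of_algebraMap_eq fun x =>
      Subtype.ext (IsScalarTower.algebraMap_apply k S L x)
    have h : Algebra.FiniteType k T :=
      Algebra.FiniteType.trans (S := S) inferInstance inferInstance
    exact h
  have hφT : ∀ x ∈ Tk, φ x ∈ Tk := by
    intro x hx
    change x ∈ Algebra.adjoin S X at hx
    induction hx using Algebra.adjoin_induction with
    | mem x hx => exact hCT _ (heC x (hXC x hx))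
    | algebraMap s => rw [hφS]; exact T.algebraMap_mem _
    | add x y _ _ hx hy => rw [map_add]; exact add_mem hx hy
    | mul x y _ _ hx hy => rw [map_mul]; exact mul_mem hx hy
  let FT : Tk →ₐ[k] Tk := (φ.comp Tk.val).codRestrict Tk fun x => hφT x x.2
  have hCTk : C ≤ Tk := hCT
  -- the birational case, applied to `C ⊆ T`
  have hback : ∀ t, φ t ∈ Tk → t ∈ Tk := by
    intro t ht
    obtain ⟨r, hr, hint⟩ := (Algebra.IsAlgebraic.isAlgebraic (R := R) t).exists_integral_multiple
    let b : C := ⟨algebraMap R L r, isIntegral_algebraMap⟩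
    let c : C := ⟨algebraMap R L r * t, by rw [← Algebra.smul_def]; exact hint⟩
    have hdvd : FT (Subalgebra.inclusion hCTk b) ∣ FT (Subalgebra.inclusion hCTk c) :=
      ⟨⟨φ t, ht⟩, Subtype.ext (map_mul φ (algebraMap R L r) t)⟩
    obtain ⟨z, hz⟩ := dvd_of_map_dvd (Subalgebra.inclusion hCTk) gC FT (fun _ => rfl) b c hdvd
    have hz' : algebraMap R L r * t = algebraMap R L r * z := congrArg Subtype.val hz
    have hr' : algebraMap R L r ≠ 0 := fun h => hr (hRL (by rw [h, map_zero]))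
    rw [mul_left_cancel₀ hr' hz']
    exact z.2
  -- the ascending chain `φ⁻ⁿ(S)` of `S`-submodules of `T`
  have hiter : ∀ n s, φ^[n] (algebraMap S L s) = algebraMap S L (F^[n] s) := fun n s =>
    ((Function.Semiconj.iterate_right (f := algebraMap S L) (ga := F) (gb := φ)
      (fun s => (hφS s).symm) n) s).symm
  have hbackn : ∀ n t, φ^[n] t ∈ Tk → t ∈ Tk := by
    intro n
    induction n with
    | zero => exact fun t ht => ht
    | succ n ih => exact fun t ht => hback t (ih _ ht)
  let M : ℕ → Submodule S L := fun n =>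
    { carrier := {x | φ^[n] x ∈ (algebraMap S L).range}
      zero_mem' := by
        change φ^[n] 0 ∈ (algebraMap S L).range
        rw [iterate_map_zero]; exact zero_mem _
      add_mem' := fun {x y} hx hy => by
        change φ^[n] (x + y) ∈ (algebraMap S L).range
        rw [iterate_map_add]; exact add_mem hx hy
      smul_mem' := fun s x hx => by
        change φ^[n] (s • x) ∈ (algebraMap S L).range
        rw [Algebra.smul_def, iterate_map_mul, hiter]
        exact mul_mem ⟨_, rfl⟩ hx }
  have hMmono : Monotone M := monotone_nat_of_le_succ fun n x ⟨s, hs⟩ => by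
    change φ^[n + 1] x ∈ (algebraMap S L).range
    rw [Function.iterate_succ_apply', ← hs, hφS]
    exact ⟨_, rfl⟩
  have hMT : ∀ n, M n ≤ Subalgebra.toSubmodule T := fun n x ⟨s, hs⟩ =>
    hbackn n x (by rw [← hs]; exact T.algebraMap_mem s)
  obtain ⟨n, hn⟩ := monotone_stabilizes_iff_noetherian.2 hTnoeth
    ⟨fun n => (M n).comap (Subalgebra.toSubmodule T).subtype,
      fun a b hab => Submodule.comap_mono (hMmono hab)⟩
  intro s
  obtain ⟨x, hx⟩ := hφ.2.iterate (n + 1) (algebraMap S L s)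
  have hxM : x ∈ M (n + 1) := ⟨s, hx.symm⟩
  have hxT := hMT _ hxM
  have hmem : (⟨x, hxT⟩ : Subalgebra.toSubmodule T) ∈
      (M n).comap (Subalgebra.toSubmodule T).subtype := by
    have h : (M n).comap (Subalgebra.toSubmodule T).subtype =
        (M (n + 1)).comap (Subalgebra.toSubmodule T).subtype := hn (n + 1) (Nat.le_succ n)
    rw [h]
    exact hxM
  obtain ⟨s', hs'⟩ := (show φ^[n] x ∈ (algebraMap S L).range from hmem)
  refine ⟨s', hSL ?_⟩
  rw [← hφS, hs', ← Function.iterate_succ_apply' φ, hx]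

/-- Let `k` be a field of characteristic 0 and `S`, `R` affine domains over `k` with
`R` a `k`-subalgebra of `S` and with the same transcendence degree over `k` (i.e. their
fraction fields have the same transcendence degree over `k`).  If `F : S → S` is a
`k`-algebra endomorphism with `F(R) ⊆ R` whose restriction `R → R` is bijective, then
`F` itself is bijective. -/
theorem subring_invariant_automorphism_extends
    {k S : Type*} [Field k] [CharZero k]
    [CommRing S] [IsDomain S] [Algebra k S] [Algebra.FiniteType k S]
    (R : Subalgebra k S) [Algebra.FiniteType k ↥R]
    (htr : trdeg k (FractionRing ↥R) = trdeg k (FractionRing S))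
    (F : S →ₐ[k] S) (hF : ∀ r ∈ R, F r ∈ R)
    (hGbij : Function.Bijective (fun r : ↥R => (⟨F r.1, hF r.1 r.2⟩ : ↥R))) :
    Function.Bijective F := by
  have := isAlgebraic_of_trdeg_eq R htr
  let g : R ≃ₐ[k] R :=
    AlgEquiv.ofBijective ((F.comp R.val).codRestrict R fun r => hF r.1 r.2) hGbij
  have hFg : ∀ r, F (algebraMap R S r) = algebraMap R S (g r) := fun _ => rfl
  have hinj : Function.Injective F := injective_of_algebraic g g.injective (F : S →+* S) hFg
  exact ⟨hinj, surjective_of_isAlgebraic (L := FractionRing S) g F hinj hFg⟩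
end

section
/- Let R and S be integral domains that are finitely generated ℂ-algebras, and let ι : R → S be an injective ℂ-algebra homomorphism (so the corresponding morphism ρ : X → Y of the irreducible affine varieties X = Spec S, Y = Spec R is dominant). Assume R is integrally closed in its fraction field (Y is normal, hence has no selfintersection points). Let F : S → S be a bijective ℂ-algebra homomorphism and G : R → R a ℂ-algebra homomorphism with ι ∘ G = F ∘ ι. If G is not bijective, then there exists a prime ideal p of R with height p = 1 such that the prime ideal G⁻¹(p) (the preimage of p under G) has height at least 2, and the ideal of S generated by ι(p) is the unit ideal. (Geometrically: the hypersurface D = V(p) ⊂ Y satisfies codim_Y g(D) ≥ 2 and ρ⁻¹(D) = ∅.) -/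
/-!
The proof compares `G` with the automorphism `F` by means of the ascending chain condition: an
ideal or submodule attached to `ι` that `F` carries into itself is carried onto itself.

* Applied to the ideal of `X ×_Y X` in `S ⊗ S`, this shows that `G` is an isomorphism on fraction
  fields (`birational`). Applied to the jets of `ι R` in the modules of principal parts of `S`, it
  shows that at every closed point `Q` of `X` each `ι b` agrees with some `ι (G a)` modulo `Q ^ n`,
  for every `n` (`exists_approx`).

* Some height-one prime `p` has `G⁻¹ p` of height at least two (`exists_exceptional`). Otherwise
  `p ↦ G⁻¹ p` is injective on the finite set of height-one primes missed by `X`, hence a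
  permutation of it, while the height-one primes met by `X` are reached through `F`; since `R` is
  the intersection of its localizations at height-one primes, `G` would be surjective.

* For this `p` the ideal `ι(p) S` is the unit ideal. Otherwise it lies in a maximal ideal `Q`, and
  `unramified_step`, applied to `ι ∘ G`, writes every `b : R` as `G a / G s` with `G s ∉ p`.
  Then `R_{G⁻¹ p} → R_p` is an isomorphism and `p`, `G⁻¹ p` have the same height.

The last point rests on the principle that a rational function on a normal variety `Spec A` which
is formally regular at the image of `Q` is regular there. The obstacle is that the
formal neighbourhood could have several branches, only one of which is seen by `Q`. Take a Noether
normalization `ℂ[x] → A` with `x` vanishing at the point, so that `A ⊗ ℂ⟦x⟧` is flat over `A`, and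
let `κ` be the common kernel of the evaluations `A ⊗ ℂ⟦x⟧ → S ⧸ Q ^ n`. The ideal `κ + Ann κ` is
stable under derivations and contains a nonzero power series by generic étaleness, hence a nonzero
element of `A`. Its contraction to `A` is a nonzero ideal stable under derivations, so it
has codimension at least two (`not_le_of_forall_derivation_mem`), and normality turns this into an
idempotent that separates the branch (`exists_idempotent_completion`). Flatness then descends the
formal statement to `A`.
-/

/-- The height of an ideal `I`: the infimum of the heights of the prime ideals
containing `I` (in the prime spectrum, ordered by inclusion). -/
noncomputable def Ideal.heightOf {R : Type*} [CommRing R] (I : Ideal R) : ℕ∞ :=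
  ⨅ p ∈ {p : PrimeSpectrum R | I ≤ p.asIdeal}, Order.height p

/-! ### Normal Noetherian domains in codimension one -/

/-- If a prime `P` of a normal Noetherian domain is a colon ideal `(h : x)`, then `P` becomes
principal after localization at `P`: otherwise `(x / h) P ⊆ P`, so `x / h` is integral over `R`,
hence in `R`, and `P` is the unit ideal. -/
lemma uniformizer_of_colon {R : Type*} [CommRing R] [IsDomain R] [IsNoetherianRing R]
    [IsIntegrallyClosed R] {h x : R} (hh : h ≠ 0) {P : Ideal R} (hP : P.IsPrime)
    (hx : ∀ s, s ∈ P ↔ h ∣ s * x) :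
    ∃ t ∈ P, ∃ u ∉ P, ∀ s ∈ P, t ∣ u * s := by
  by_cases hc : ∃ t ∈ P, ∃ u ∉ P, t * x = h * u
  · obtain ⟨t, ht, u, hu, e⟩ := hc
    refine ⟨t, ht, u, hu, fun s hs => ?_⟩
    obtain ⟨s', hs'⟩ := (hx s).1 hs
    refine ⟨s', mul_left_cancel₀ hh ?_⟩
    linear_combination (-s) * e + t * hs'
  · exfalso
    push Not at hc
    let K := FractionRing R
    have hhK : algebraMap R K h ≠ 0 := by
      simpa using hh
    have hhP : h ∈ P := (hx h).2 (dvd_mul_right _ _)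
    have key : IsIntegral R (algebraMap R K x / algebraMap R K h) := by
      refine isIntegral_of_smul_mem_submodule
        (N := Submodule.map (Algebra.linearMap R K) P) ?_ ?_ _ ?_
      · intro h0
        have : algebraMap R K h ∈ Submodule.map (Algebra.linearMap R K) P :=
          ⟨h, hhP, rfl⟩
        rw [h0] at this
        exact hhK (by simpa using this)
      · exact Submodule.FG.map _ (IsNoetherian.noetherian P)
      · rintro _ ⟨s, hs, rfl⟩
        obtain ⟨s', hs'⟩ := (hx s).1 hs
        refine ⟨s', ?_, ?_⟩
        · by_contra hn
          exact hc s hs s' hn hs'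
        · simp only [Algebra.linearMap_apply, smul_eq_mul]
          rw [div_mul_eq_mul_div, eq_div_iff hhK, ← map_mul, ← map_mul]
          exact congrArg _ (by linear_combination (-1 : R) * hs')
    obtain ⟨y, hy⟩ := IsIntegrallyClosed.isIntegral_iff.1 key
    apply hP.ne_top
    rw [Ideal.eq_top_iff_one, hx]
    refine ⟨y, ?_⟩
    apply IsFractionRing.injective R K
    rw [eq_div_iff hhK] at hy
    rw [one_mul, ← hy, map_mul, mul_comm]

lemma height_one_of_uniformizer {R : Type*} [CommRing R] [IsDomain R] [IsNoetherianRing R]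
    {P : Ideal R} (hP : P.IsPrime) (h0 : P ≠ ⊥) {t u : R} (ht : t ∈ P) (hu : u ∉ P)
    (h : ∀ s ∈ P, t ∣ u * s) : P.height = 1 := by
  apply le_antisymm
  · refine Ideal.height_le_one_of_isPrincipal_of_mem_minimalPrimes (Ideal.span {t}) P ?_
    refine ⟨⟨hP, by simpa [Ideal.span_le] using ht⟩, ?_⟩
    rintro J ⟨hJ, htJ⟩ hJP s hs
    have h1 : u * s ∈ J := J.mem_of_dvd (h s hs) (htJ (Ideal.mem_span_singleton_self t))
    exact (hJ.mem_or_mem h1).resolve_left fun h2 => hu (hJP h2)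
  · rw [Order.one_le_iff_ne_zero]
    rwa [ne_eq, Ideal.height_eq_zero_iff_eq_bot]

lemma colon_of_isAssociatedPrime {R : Type*} [CommRing R] [IsNoetherianRing R] {h : R}
    {P : Ideal R} (hP : IsAssociatedPrime P (R ⧸ Ideal.span {h})) :
    ∃ x, ∀ s, s ∈ P ↔ h ∣ s * x := by
  rw [isAssociatedPrime_iff] at hP
  obtain ⟨_, x, rfl⟩ := hP
  obtain ⟨x, rfl⟩ := Ideal.Quotient.mk_surjective x
  refine ⟨x, fun s => ?_⟩
  rw [Submodule.mem_colon_singleton, Submodule.mem_bot, ← Ideal.mem_span_singleton,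
    ← Ideal.Quotient.eq_zero_iff_mem, map_mul]
  rfl

lemma height_one_of_isAssociatedPrime {R : Type*} [CommRing R] [IsDomain R] [IsNoetherianRing R]
    [IsIntegrallyClosed R] {h : R} (hh : h ≠ 0)
    {P : Ideal R} (hP : IsAssociatedPrime P (R ⧸ Ideal.span {h})) : P.height = 1 := by
  obtain ⟨x, hx⟩ := colon_of_isAssociatedPrime hP
  obtain ⟨t, ht, u, hu, H⟩ := uniformizer_of_colon hh hP.1 hx
  refine height_one_of_uniformizer hP.1 ?_ ht hu H
  rintro rfl
  exact hh (by simpa using (hx h).2 (dvd_mul_right _ _))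

/-- An elementwise form of `P R_P = t R_P`, with a single denominator `u`. -/
lemma exists_uniformizer {R : Type*} [CommRing R] [IsDomain R] [IsNoetherianRing R]
    [IsIntegrallyClosed R] {P : Ideal R} (hP : P.IsPrime) (h1 : P.height = 1) :
    ∃ t ∈ P, t ≠ 0 ∧ ∃ u ∉ P, ∀ s ∈ P, t ∣ u * s := by
  obtain ⟨h, hhP, hh⟩ := Submodule.exists_mem_ne_zero_of_ne_bot (Ideal.ne_bot_of_height_eq_one h1)
  have : P ∈ (Ideal.span {h}).minimalPrimes := by
    refine Ideal.mem_minimalPrimes_of_height_le (by simpa [Ideal.span_le] using hhP) ?_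
    rw [h1]
    refine (Ideal.height_span_singleton_eq_one_of_mem_nonZeroDivisors (by simpa using hh) ?_).ge
    intro hu
    exact hP.ne_top (Ideal.eq_top_of_isUnit_mem _ hhP hu)
  have h2 : P ∈ associatedPrimes R (R ⧸ Ideal.span {h}) := by
    apply Module.associatedPrimes.minimalPrimes_annihilator_subset_associatedPrimes
    rwa [Ideal.annihilator_quotient]
  obtain ⟨x, hx⟩ := colon_of_isAssociatedPrime h2
  obtain ⟨t, ht, u, hu, H⟩ := uniformizer_of_colon hh hP hx
  refine ⟨t, ht, ?_, u, hu, H⟩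
  rintro rfl
  have := H h hhP
  rw [zero_dvd_iff, mul_eq_zero] at this
  rcases this with rfl | h3
  · exact hu P.zero_mem
  · exact hh h3

/-- A form of `R = ⋂ R_P` over height-one primes: the denominators of a fraction `x / h ∉ R` all
lie in a common prime of height one. -/
lemma exists_height_one_of_not_dvd {R : Type*} [CommRing R] [IsDomain R] [IsNoetherianRing R]
    [IsIntegrallyClosed R] {h x : R} (hh : h ≠ 0) (hx : ¬ h ∣ x) :
    ∃ P : Ideal R, P.IsPrime ∧ P.height = 1 ∧ ∀ s, h ∣ s * x → s ∈ P := by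
  have : Ideal.Quotient.mk (Ideal.span {h}) x ≠ 0 := by
    rwa [ne_eq, Ideal.Quotient.eq_zero_iff_mem, Ideal.mem_span_singleton]
  obtain ⟨P, hP, hle⟩ := exists_le_isAssociatedPrime_of_isNoetherianRing R _ this
  refine ⟨P, hP.1, height_one_of_isAssociatedPrime hh hP, fun s hs => hle ?_⟩
  rw [Submodule.mem_colon_singleton, Submodule.mem_bot]
  rw [← Ideal.mem_span_singleton, ← Ideal.Quotient.eq_zero_iff_mem, map_mul] at hs
  exact hs

/-- Serre's condition `S₂`: an ideal contained in no prime of height one contains, for every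
`h ≠ 0`, a nonzerodivisor modulo `h`. -/
lemma exists_regular_of_forall_height_one {R : Type*} [CommRing R] [IsDomain R]
    [IsNoetherianRing R] [IsIntegrallyClosed R] (c : Ideal R)
    (hc : ∀ P : Ideal R, P.IsPrime → P.height = 1 → ¬ c ≤ P) {h : R} (hh : h ≠ 0) :
    ∃ y ∈ c, ∀ x, h ∣ y * x → h ∣ x := by
  have hfin := associatedPrimes.finite R (R ⧸ Ideal.span {h})
  have hnot : ¬ ((c : Set R) ⊆ ⋃ P ∈ (hfin.toFinset : Set (Ideal R)), (P : Set R)) := by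
    rw [Ideal.subset_union_prime (f := fun P => P) ⊥ ⊥]
    · rintro ⟨P, hP, hle⟩
      rw [Set.Finite.mem_toFinset] at hP
      exact hc P hP.1 (height_one_of_isAssociatedPrime hh hP) hle
    · intro P hP _ _
      rw [Set.Finite.mem_toFinset] at hP
      exact hP.1
  rw [Set.not_subset] at hnot
  obtain ⟨y, hy, hyn⟩ := hnot
  refine ⟨y, hy, fun x hx => ?_⟩
  by_contra hcon
  apply hyn
  rw [Set.Finite.coe_toFinset, biUnion_associatedPrimes_eq_zero_divisors]
  refine ⟨Ideal.Quotient.mk _ x, ?_, ?_⟩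
  · rwa [ne_eq, Ideal.Quotient.eq_zero_iff_mem, Ideal.mem_span_singleton]
  · rw [← Ideal.mem_span_singleton, ← Ideal.Quotient.eq_zero_iff_mem, map_mul] at hx
    exact hx

lemma dvr_of_height_one {R : Type*} [CommRing R] [IsDomain R] [IsNoetherianRing R]
    [IsIntegrallyClosed R] {P : Ideal R} [hP : P.IsPrime] (h1 : P.height = 1) :
    IsDiscreteValuationRing (Localization.AtPrime P) := by
  obtain ⟨t, ht, ht0, u, hu, H⟩ := exists_uniformizer hP h1
  have hfield : ¬ IsField (Localization.AtPrime P) := by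
    intro hf
    have := IsLocalization.AtPrime.ringKrullDim_eq_height P (Localization.AtPrime P)
    rw [ringKrullDim_eq_zero_of_isField hf, h1] at this
    norm_num at this
  refine ((IsDiscreteValuationRing.TFAE _ hfield).out 0 4).2 ?_
  refine ⟨algebraMap _ _ t, ?_⟩
  rw [← Localization.AtPrime.map_eq_maximalIdeal]
  apply le_antisymm
  · rw [Ideal.map_le_iff_le_comap]
    intro s hs
    obtain ⟨z, hz⟩ := H s hs
    have hu' : IsUnit (algebraMap R (Localization.AtPrime P) u) :=
      IsLocalization.map_units (M := P.primeCompl) _ ⟨u, hu⟩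
    rw [Ideal.mem_comap]
    refine Ideal.mem_span_singleton.2 (hu'.dvd_mul_left.1 ?_)
    rw [← map_mul, hz, map_mul]
    exact dvd_mul_right _ _
  · rw [Ideal.submodule_span_eq, Ideal.span_le, Set.singleton_subset_iff]
    exact Ideal.mem_map_of_mem _ ht

/-- For `P` of height one, either `a / h` lies in the valuation ring `R_P`, or `h / a` lies in its
maximal ideal, written without denominators. -/
lemma valuation_dichotomy {R : Type*} [CommRing R] [IsDomain R] [IsNoetherianRing R]
    [IsIntegrallyClosed R] {P : Ideal R} (hP : P.IsPrime) (h1 : P.height = 1) (a h : R) :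
    (∃ s ∉ P, h ∣ s * a) ∨ (∃ s ∉ P, ∃ h' ∈ P, s * h = h' * a) := by
  have := dvr_of_height_one h1
  let O := Localization.AtPrime P
  have hinj : Function.Injective (algebraMap R O) :=
    IsLocalization.injective _ P.primeCompl_le_nonZeroDivisors
  rcases ValuationRing.dvd_total (algebraMap R O h) (algebraMap R O a) with hd | hd
  · left
    obtain ⟨z, hz⟩ := hd
    obtain ⟨⟨r, s⟩, hrs⟩ := IsLocalization.surj P.primeCompl z
    refine ⟨s, s.2, r, hinj ?_⟩
    rw [map_mul, map_mul, hz, ← hrs]; ring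
  · obtain ⟨z, hz⟩ := hd
    obtain ⟨⟨r, s⟩, hrs⟩ := IsLocalization.surj P.primeCompl z
    have e : (s : R) * h = r * a := by
      apply hinj
      rw [map_mul, map_mul, hz, ← hrs]; ring
    by_cases hr : r ∈ P
    · exact Or.inr ⟨s, s.2, r, hr, e⟩
    · exact Or.inl ⟨r, hr, s, by rw [← e, mul_comm]⟩

/-! ### Birationality and approximation of jets -/

section

open TensorProduct

/-- An automorphism of a poset with the ascending chain condition fixes each element that it moves
down. Applied below to lattices of ideals and submodules, this is where bijectivity of `F` enters. -/
lemma OrderIso.map_eq_of_le {α : Type*} [PartialOrder α] [WellFoundedGT α] (e : α ≃o α) {x : α}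
    (h : e x ≤ x) : e x = x := by
  have h' : x ≤ e.symm x := by rwa [e.le_symm_apply]
  have mono : Monotone fun n : ℕ => e.symm^[n] x :=
    e.symm.monotone.monotone_iterate_of_le_map h'
  obtain ⟨n, hn⟩ := WellFoundedGT.monotone_chain_condition ⟨_, mono⟩
  have h1 : e.symm^[n] x = e.symm^[n + 1] x := hn (n + 1) n.le_succ
  rw [Function.iterate_succ_apply] at h1
  have h2 := (e.symm.injective.iterate n) h1
  exact (e.symm_apply_eq.1 h2.symm).symm

lemma mem_range_of_tmul_eq {k L : Type*} [Field k] [Field L] [Algebra k L] {x : L}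
    (h : x ⊗ₜ[k] (1 : L) = 1 ⊗ₜ x) : x ∈ (algebraMap k L).range := by
  by_contra hx
  have hx' : x ∉ Submodule.span k {(1 : L)} := by
    intro h1
    obtain ⟨c, rfl⟩ := Submodule.mem_span_singleton.1 h1
    exact hx ⟨c, by rw [Algebra.algebraMap_eq_smul_one]⟩
  obtain ⟨f, hf, hf'⟩ := Submodule.exists_dual_map_eq_bot_of_notMem hx' inferInstance
  have h1 : f 1 = 0 := by
    have : f 1 ∈ (Submodule.span k {(1 : L)}).map f :=
      Submodule.mem_map_of_mem (Submodule.mem_span_singleton_self 1)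
    rwa [hf', Submodule.mem_bot] at this
  have := congrArg (TensorProduct.lid k L) (congrArg (f.rTensor L) h)
  simp only [LinearMap.rTensor_tmul, TensorProduct.lid_tmul, h1, zero_smul] at this
  rw [smul_eq_zero] at this
  exact this.elim hf one_ne_zero

section
variable {R S : Type*} [CommRing R] [CommRing S] [Algebra ℂ R] [Algebra ℂ S] [Algebra.FiniteType ℂ S]

/-- The ideal of `X ×_Y X` in `X × X` is carried into itself by the automorphism `F ⊗ F`, hence onto
itself: the functions `ι b` and `ι (G b)` cut out the same subscheme. -/
lemma diagonal_mem
    (ι : R →ₐ[ℂ] S) (F : S →ₐ[ℂ] S) (hF : Function.Bijective F)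
    (G : R →ₐ[ℂ] R) (hcomm : ∀ r, ι (G r) = F (ι r)) (b : R) :
    (ι b ⊗ₜ[ℂ] (1 : S) - 1 ⊗ₜ ι b) ∈
      Ideal.span (Set.range fun r : R => ι (G r) ⊗ₜ[ℂ] (1 : S) - 1 ⊗ₜ ι (G r)) := by
  let f := AlgEquiv.ofBijective F hF
  let Φ : S ⊗[ℂ] S ≃ₐ[ℂ] S ⊗[ℂ] S := Algebra.TensorProduct.congr f f
  let I := Ideal.span (Set.range fun r : R => ι r ⊗ₜ[ℂ] (1 : S) - 1 ⊗ₜ ι r)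
  have hft : Algebra.FiniteType ℂ (S ⊗[ℂ] S) :=
    Algebra.FiniteType.trans (S := S) inferInstance inferInstance
  have hN : IsNoetherianRing (S ⊗[ℂ] S) := Algebra.FiniteType.isNoetherianRing ℂ _
  have e1 : I.map (Φ : S ⊗[ℂ] S →+* S ⊗[ℂ] S) =
      Ideal.span (Set.range fun r : R => ι (G r) ⊗ₜ[ℂ] (1 : S) - 1 ⊗ₜ ι (G r)) := by
    rw [Ideal.map_span, ← Set.range_comp]
    congr 2
    funext r
    simp [Φ, f, hcomm]
  have hle : I.map (Φ : S ⊗[ℂ] S →+* S ⊗[ℂ] S) ≤ I := by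
    rw [e1, Ideal.span_le]
    rintro _ ⟨r, rfl⟩
    exact Ideal.subset_span ⟨G r, rfl⟩
  have := OrderIso.map_eq_of_le (Φ.toRingEquiv.idealComapOrderIso.symm) (x := I) (by
    rw [RingEquiv.idealComapOrderIso_symm_apply]; exact hle)
  rw [← e1]
  have h2 : I.map (Φ : S ⊗[ℂ] S →+* S ⊗[ℂ] S) = I := this
  rw [h2]
  exact Ideal.subset_span ⟨b, rfl⟩

/-- `G` induces an isomorphism of fraction fields. -/
lemma birational [IsDomain R] [IsDomain S]
    (ι : R →ₐ[ℂ] S) (hι : Function.Injective ι) (F : S →ₐ[ℂ] S) (hF : Function.Bijective F)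
    (G : R →ₐ[ℂ] R) (hcomm : ∀ r, ι (G r) = F (ι r)) (hG : Function.Injective G) (b : R) :
    ∃ h a : R, h ≠ 0 ∧ G h * b = G a := by
  let K := FractionRing R
  let L := FractionRing S
  let ψ : R →+* L := (algebraMap S L).comp ((ι.comp G : R →ₐ[ℂ] S) : R →+* S)
  have hψ : Function.Injective ψ :=
    (IsFractionRing.injective S L).comp (hι.comp hG)
  let j : K →+* L := IsFractionRing.lift hψ
  let : Algebra K L := j.toAlgebra
  have hj : ∀ r : R, algebraMap K L (algebraMap R K r) = algebraMap S L (ι (G r)) := fun r =>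
    IsFractionRing.lift_algebraMap hψ r
  have : IsScalarTower ℂ K L := IsScalarTower.of_algebraMap_eq fun z => by
    rw [IsScalarTower.algebraMap_apply ℂ R K, hj, AlgHom.commutes, AlgHom.commutes,
      ← IsScalarTower.algebraMap_apply]
  let m : S ⊗[ℂ] S →ₐ[ℂ] L ⊗[K] L :=
    Algebra.TensorProduct.lift
      (((Algebra.TensorProduct.includeLeft : L →ₐ[K] L ⊗[K] L).restrictScalars ℂ).comp
        (IsScalarTower.toAlgHom ℂ S L))
      (((Algebra.TensorProduct.includeRight : L →ₐ[K] L ⊗[K] L).restrictScalars ℂ).comp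
        (IsScalarTower.toAlgHom ℂ S L))
      (fun _ _ => Commute.all _ _)
  have hm : ∀ s : S, m (s ⊗ₜ 1 - 1 ⊗ₜ s) =
      (algebraMap S L s) ⊗ₜ[K] (1 : L) - 1 ⊗ₜ algebraMap S L s := by
    intro s
    simp [m]
  have hker : Ideal.span (Set.range fun r : R => ι (G r) ⊗ₜ[ℂ] (1 : S) - 1 ⊗ₜ ι (G r)) ≤
      RingHom.ker m := by
    rw [Ideal.span_le]
    rintro _ ⟨r, rfl⟩
    rw [SetLike.mem_coe, RingHom.mem_ker, hm, ← hj, sub_eq_zero]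
    rw [Algebra.algebraMap_eq_smul_one, TensorProduct.smul_tmul]
  have h1 := hker (diagonal_mem ι F hF G hcomm b)
  rw [RingHom.mem_ker, hm, sub_eq_zero] at h1
  obtain ⟨z, hz⟩ := mem_range_of_tmul_eq h1
  obtain ⟨a, h, hh, rfl⟩ := IsFractionRing.div_surjective (A := R) z
  refine ⟨h, a, nonZeroDivisors.ne_zero hh, hι (IsFractionRing.injective S L ?_)⟩
  have hh0 : algebraMap S L (ι (G h)) ≠ 0 := by
    rw [ne_eq, map_eq_zero_iff _ (IsFractionRing.injective S L), map_eq_zero_iff _ hι,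
      map_eq_zero_iff _ hG]
    exact nonZeroDivisors.ne_zero hh
  rw [map_div₀, hj, hj, div_eq_iff hh0] at hz
  rw [map_mul, map_mul, ← hj, ← hj, mul_comm, hj, hj, hz]

lemma exists_character (Q : Ideal S) [hQ : Q.IsMaximal] :
    ∃ χ : S →ₐ[ℂ] ℂ, ∀ s, s - algebraMap ℂ S (χ s) ∈ Q := by
  let : Field (S ⧸ Q) := Ideal.Quotient.field Q
  have : Module.Finite ℂ (S ⧸ Q) := finite_of_finite_type_of_isJacobsonRing ℂ (S ⧸ Q)
  have hb : Function.Bijective (algebraMap ℂ (S ⧸ Q)) :=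
    IsAlgClosed.algebraMap_bijective_of_isIntegral
  let e := AlgEquiv.ofBijective (Algebra.ofId ℂ (S ⧸ Q)) hb
  refine ⟨(e.symm : (S ⧸ Q) →ₐ[ℂ] ℂ).comp (Ideal.Quotient.mkₐ ℂ Q), fun s => ?_⟩
  rw [← Ideal.Quotient.eq_zero_iff_mem, map_sub, sub_eq_zero]
  exact (e.apply_symm_apply (Ideal.Quotient.mk Q s)).symm

/-- The module of principal parts of order `< n` is finite over `S`, since `1 ⊗ t` is a root of
`(X - t) ^ n` in it. -/
lemma finite_principalParts (n : ℕ) :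
    Module.Finite S (S ⊗[ℂ] S ⧸ (KaehlerDifferential.ideal ℂ S ^ n)) := by
  let T := S ⊗[ℂ] S ⧸ (KaehlerDifferential.ideal ℂ S ^ n)
  have hft : Algebra.FiniteType S T :=
    Algebra.FiniteType.of_surjective (Ideal.Quotient.mkₐ S (KaehlerDifferential.ideal ℂ S ^ n))
      (Ideal.Quotient.mkₐ_surjective _ _)
  have hintegral : Algebra.IsIntegral S T := by
    refine ⟨fun x => ?_⟩
    obtain ⟨x, rfl⟩ := Ideal.Quotient.mk_surjective x
    induction x using TensorProduct.induction_on with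
    | zero => rw [map_zero]; exact isIntegral_zero
    | add x y hx hy => rw [map_add]; exact hx.add hy
    | tmul s t =>
      have h1 : s ⊗ₜ[ℂ] t = s • ((1 : S) ⊗ₜ[ℂ] t) := by
        rw [TensorProduct.smul_tmul', smul_eq_mul, mul_one]
      have h2 : Ideal.Quotient.mk (KaehlerDifferential.ideal ℂ S ^ n) (s ⊗ₜ[ℂ] t) =
          s • (Ideal.Quotient.mk (KaehlerDifferential.ideal ℂ S ^ n) ((1 : S) ⊗ₜ[ℂ] t)) := by
        rw [h1]; rfl
      rw [h2]
      refine IsIntegral.smul s ?_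
      refine ⟨(Polynomial.X - Polynomial.C t) ^ n, (Polynomial.monic_X_sub_C t).pow n, ?_⟩
      rw [Polynomial.eval₂_pow, Polynomial.eval₂_sub, Polynomial.eval₂_X, Polynomial.eval₂_C]
      change (Ideal.Quotient.mk (KaehlerDifferential.ideal ℂ S ^ n) ((1 : S) ⊗ₜ[ℂ] t) -
        Ideal.Quotient.mk (KaehlerDifferential.ideal ℂ S ^ n) (t ⊗ₜ[ℂ] (1 : S))) ^ n = 0
      rw [← map_sub, ← map_pow, Ideal.Quotient.eq_zero_iff_mem]
      exact Ideal.pow_mem_pow (KaehlerDifferential.one_smul_sub_smul_one_mem_ideal ℂ t) n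
  exact Algebra.IsIntegral.finite

/-- Every `ι b` is approximated to any order at any closed point by some `ι (G a)`. The `S`-span of
the jets of `ι R` in the module of principal parts is carried into itself by `F`, hence onto
itself; specializing the jets at the point `Q` gives the claim. -/
lemma exists_approx
    (ι : R →ₐ[ℂ] S) (F : S →ₐ[ℂ] S) (hF : Function.Bijective F)
    (G : R →ₐ[ℂ] R) (hcomm : ∀ r, ι (G r) = F (ι r)) (Q : Ideal S) [hQ : Q.IsMaximal]
    (n : ℕ) (b : R) : ∃ a : R, ι b - ι (G a) ∈ Q ^ n := by
  let I := KaehlerDifferential.ideal ℂ S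
  let T := S ⊗[ℂ] S ⧸ (I ^ n)
  let q : S ⊗[ℂ] S →+* T := Ideal.Quotient.mk (I ^ n)
  have : Module.Finite S T := finite_principalParts n
  have : IsNoetherianRing S := Algebra.FiniteType.isNoetherianRing ℂ _
  have : IsNoetherian S T := inferInstance
  let f := AlgEquiv.ofBijective F hF
  let Φ : S ⊗[ℂ] S ≃ₐ[ℂ] S ⊗[ℂ] S := Algebra.TensorProduct.congr f f
  have hΦI : I = I.map (Φ.toRingEquiv : S ⊗[ℂ] S →+* S ⊗[ℂ] S) := by
    have hlm : ∀ x, Algebra.TensorProduct.lmul' (S := S) ℂ (Φ x) =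
        F (Algebra.TensorProduct.lmul' (S := S) ℂ x) := by
      intro x
      induction x using TensorProduct.induction_on with
      | zero => simp
      | add x y hx hy => simp only [map_add, hx, hy]
      | tmul s t => simp [Φ, f]
    ext x
    refine Iff.trans ?_ (Ideal.mem_map_of_equiv Φ.toRingEquiv x).symm
    constructor
    · intro hx
      refine ⟨Φ.symm x, ?_, Φ.apply_symm_apply x⟩
      have h1 : Algebra.TensorProduct.lmul' (S := S) ℂ x = 0 := hx
      have h2 := hlm (Φ.symm x)
      rw [Φ.apply_symm_apply, h1] at h2
      exact hF.1 (by rw [map_zero]; exact h2.symm)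
    · rintro ⟨y, hy, rfl⟩
      have h1 : Algebra.TensorProduct.lmul' (S := S) ℂ y = 0 := hy
      change Algebra.TensorProduct.lmul' (S := S) ℂ (Φ y) = 0
      rw [hlm, h1, map_zero]
  have hΦIn : I ^ n = (I ^ n).map (Φ.toRingEquiv : S ⊗[ℂ] S →+* S ⊗[ℂ] S) := by
    rw [Ideal.map_pow, ← hΦI]
  let E : T ≃+* T := Ideal.quotientEquiv (I ^ n) (I ^ n) Φ.toRingEquiv hΦIn
  have hE : ∀ x, E (q x) = q (Φ x) := fun x => rfl
  have : RingHomSurjective (F : S →+* S) := ⟨hF.2⟩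
  -- `F ⊗ F` induces an `F`-semilinear automorphism of the module of principal parts
  let Es : T →ₛₗ[(F : S →+* S)] T :=
    { toFun := E
      map_add' := map_add E
      map_smul' := by
        intro s x
        obtain ⟨x, rfl⟩ := Ideal.Quotient.mk_surjective x
        have h1 : ∀ (s : S) (x : S ⊗[ℂ] S), s • q x = q ((s ⊗ₜ 1) * x) := fun s x => by
          rw [show (s ⊗ₜ[ℂ] (1 : S)) = algebraMap S (S ⊗[ℂ] S) s from rfl, ← Algebra.smul_def]; rfl
        change E (s • q x) = F s • E (q x)
        rw [h1, hE, hE, h1, map_mul]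
        simp [Φ, f] }
  let N : Submodule S T := Submodule.span S (Set.range fun b : R => q (1 ⊗ₜ ι b))
  have hmap : N.map Es = Submodule.span S (Set.range fun r : R => q (1 ⊗ₜ ι (G r))) := by
    rw [Submodule.map_span, ← Set.range_comp]
    congr 2
    funext r
    change E (q _) = _
    rw [hE]
    simp [Φ, f, hcomm]
  have hle : N.map Es ≤ N := by
    rw [hmap, Submodule.span_le]
    rintro _ ⟨r, rfl⟩
    exact Submodule.subset_span ⟨G r, rfl⟩
  have heq : N.map Es = N := OrderIso.map_eq_of_le
    (Submodule.orderIsoMapComapOfBijective Es E.bijective) hle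
  have hb : q (1 ⊗ₜ ι b) ∈ Submodule.span S (Set.range fun r : R => q (1 ⊗ₜ ι (G r))) := by
    rw [← hmap, heq]
    exact Submodule.subset_span ⟨b, rfl⟩
  obtain ⟨χ, hχ⟩ := exists_character Q
  -- specialization of the first factor at the point `Q` maps `I` into `Q`
  let μ : S ⊗[ℂ] S →ₐ[ℂ] S :=
    Algebra.TensorProduct.lift ((Algebra.ofId ℂ S).comp χ) (AlgHom.id ℂ S)
      (fun _ _ => Commute.all _ _)
  have hμ : ∀ s t, μ (s ⊗ₜ t) = algebraMap ℂ S (χ s) * t := fun s t => by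
    simp [μ, Algebra.ofId_apply]
  have hμI : I ≤ Q.comap μ := by
    change KaehlerDifferential.ideal ℂ S ≤ _
    rw [← KaehlerDifferential.span_range_eq_ideal, Ideal.span_le]
    rintro _ ⟨s, rfl⟩
    simpa [hμ] using hχ s
  have hμIn : ∀ x ∈ I ^ n, (Ideal.Quotient.mk (Q ^ n)).comp (μ : S ⊗[ℂ] S →+* S) x = 0 := by
    intro x hx
    rw [RingHom.comp_apply, Ideal.Quotient.eq_zero_iff_mem]
    exact (Ideal.le_comap_pow (μ : S ⊗[ℂ] S →+* S) n) ((Ideal.pow_right_mono hμI n) hx)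
  let μn : T →+* S ⧸ Q ^ n := Ideal.Quotient.lift (I ^ n) _ hμIn
  have hμn : ∀ x, μn (q x) = Ideal.Quotient.mk (Q ^ n) (μ x) := fun x => rfl
  have hall : ∀ x ∈ Submodule.span S (Set.range fun r : R => q (1 ⊗ₜ ι (G r))),
      ∃ a : R, μn x = Ideal.Quotient.mk (Q ^ n) (ι (G a)) := by
    intro x hx
    induction hx using Submodule.span_induction with
    | mem x hx =>
      obtain ⟨r, rfl⟩ := hx
      exact ⟨r, by rw [hμn, hμ, map_one, map_one, one_mul]⟩
    | zero => exact ⟨0, by simp⟩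
    | add x y _ _ hx hy =>
      obtain ⟨a, ha⟩ := hx
      obtain ⟨a', ha'⟩ := hy
      exact ⟨a + a', by simp only [map_add, ha, ha']⟩
    | smul s x _ hx =>
      obtain ⟨a, ha⟩ := hx
      refine ⟨algebraMap ℂ R (χ s) * a, ?_⟩
      obtain ⟨x, rfl⟩ := Ideal.Quotient.mk_surjective x
      have h1 : s • q x = q (s ⊗ₜ 1) * q x := by
        rw [← map_mul, show (s ⊗ₜ[ℂ] (1 : S)) = algebraMap S (S ⊗[ℂ] S) s from rfl, ← Algebra.smul_def]; rfl
      change μn (s • q x) = _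
      rw [h1, map_mul, hμn, hμ, mul_one]
      rw [show μn (q x) = _ from ha]
      simp only [map_mul, AlgHom.commutes]
  obtain ⟨a, ha⟩ := hall _ hb
  refine ⟨a, ?_⟩
  rw [← Ideal.Quotient.eq_zero_iff_mem, map_sub, ← ha, hμn, hμ]
  simp

end

end

/-! ### Existence of a contracted hypersurface -/

/-- In an irreducible space, either a constructible set or its complement contains a nonempty open
set. -/
lemma Topology.IsConstructible.contains_nonempty_open {X : Type*} [TopologicalSpace X] [Nonempty X]
    [PreirreducibleSpace X] {s : Set X} (hs : Topology.IsConstructible s) :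
    (∃ U, IsOpen U ∧ U.Nonempty ∧ U ⊆ s) ∨ (∃ U, IsOpen U ∧ U.Nonempty ∧ U ⊆ sᶜ) := by
  induction hs using Topology.IsConstructible.empty_union_induction with
  | open_retrocompact U hU hU' =>
    rcases U.eq_empty_or_nonempty with rfl | h
    · exact Or.inr ⟨Set.univ, isOpen_univ, Set.univ_nonempty, by simp⟩
    · exact Or.inl ⟨U, hU, h, subset_rfl⟩
  | union s hs t ht h1 h2 =>
    rcases h1 with ⟨U, hU, hU', h⟩ | ⟨U, hU, hU', h⟩
    · exact Or.inl ⟨U, hU, hU', h.trans Set.subset_union_left⟩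
    rcases h2 with ⟨V, hV, hV', h'⟩ | ⟨V, hV, hV', h'⟩
    · exact Or.inl ⟨V, hV, hV', h'.trans Set.subset_union_right⟩
    refine Or.inr ⟨U ∩ V, hU.inter hV, nonempty_preirreducible_inter hU hV hU' hV', ?_⟩
    rw [Set.compl_union]
    exact Set.inter_subset_inter h h'
  | compl s hs h1 =>
    rw [compl_compl]
    exact h1.symm

/-- The image of the dominant morphism `Spec S → Spec R` contains a nonempty basic open set. -/
lemma exists_forall_mem_range_comap {R S : Type*} [CommRing R] [CommRing S] [IsDomain R] [IsDomain S]
    [Algebra ℂ R] [Algebra ℂ S] [Algebra.FiniteType ℂ R] [Algebra.FiniteType ℂ S]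
    (ι : R →ₐ[ℂ] S) (hι : Function.Injective ι) :
    ∃ r : R, r ≠ 0 ∧ ∀ p : PrimeSpectrum R, r ∉ p.asIdeal →
      p ∈ Set.range (PrimeSpectrum.comap (ι : R →+* S)) := by
  have : IsNoetherianRing R := Algebra.FiniteType.isNoetherianRing ℂ R
  have hfp : (ι : R →+* S).FinitePresentation := by
    algebraize [(ι : R →+* S)]
    have : IsScalarTower ℂ R S := .of_algebraMap_eq fun x => (ι.commutes x).symm
    have : Algebra.FiniteType R S := Algebra.FiniteType.of_restrictScalars_finiteType ℂ R S
    exact (RingHom.FinitePresentation.of_finiteType (f := (ι : R →+* S))).1 this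
  have hc := PrimeSpectrum.isConstructible_range_comap hfp
  have hη : (⊥ : PrimeSpectrum R) ∈ Set.range (PrimeSpectrum.comap (ι : R →+* S)) := by
    refine ⟨⊥, PrimeSpectrum.ext ?_⟩
    exact (RingHom.injective_iff_ker_eq_bot (ι : R →+* S)).1 hι
  have key : ∀ U : Set (PrimeSpectrum R), IsOpen U → U.Nonempty → ⊥ ∈ U := by
    rintro U hU ⟨p, hp⟩
    exact ((PrimeSpectrum.le_iff_specializes ⊥ p).1 bot_le).mem_open hU hp
  rcases hc.contains_nonempty_open with ⟨U, hU, hne, h⟩ | ⟨U, hU, hne, h⟩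
  · have h1 := key U hU hne
    obtain ⟨_, ⟨r, rfl⟩, hr, hrU⟩ := PrimeSpectrum.isTopologicalBasis_basic_opens.exists_subset_of_mem_open h1 hU
    exact ⟨r, by simpa using hr, fun p hp => h (hrU hp)⟩
  · exact absurd hη (h (key U hU hne))

section
variable {R : Type*} [CommRing R] [IsDomain R] [IsNoetherianRing R] [IsIntegrallyClosed R]

/-- If `G⁻¹ p = P` has height one, then `R` lies in the image of the valuation ring `R_P`: an element
outside it would have its inverse in the maximal ideal. -/
lemma exists_mul_eq_of_comap_height_one (G : R →+* R) (hG : Function.Injective G)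
    (hbir : ∀ b, ∃ h a, h ≠ 0 ∧ G h * b = G a) {P : Ideal R} (hP : P.IsPrime) (h1 : P.height = 1)
    {p : Ideal R} (hpP : p.comap G = P) (b : R) :
    ∃ s ∉ P, ∃ a, G s * b = G a := by
  obtain ⟨h, a, hh, e⟩ := hbir b
  have hGh : G h ≠ 0 := by rwa [ne_eq, map_eq_zero_iff G hG]
  rcases valuation_dichotomy hP h1 a h with ⟨s, hs, a', ha'⟩ | ⟨s, hs, h', hh', e'⟩
  · refine ⟨s, hs, a', mul_left_cancel₀ hGh ?_⟩
    rw [← map_mul, ← ha', map_mul, ← e]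
    ring
  · exfalso
    have : G s = G h' * b := by
      refine mul_left_cancel₀ hGh ?_
      rw [← map_mul, mul_comm, e', map_mul, ← e]
      ring
    apply hs
    rw [← hpP, Ideal.mem_comap] at hh' ⊢
    rw [this]
    exact Ideal.mul_mem_right _ _ hh'

/-- A height-one prime has at most one preimage under `p ↦ G⁻¹ p`. -/
lemma le_of_comap_eq_height_one (G : R →+* R) (hG : Function.Injective G)
    (hbir : ∀ b, ∃ h a, h ≠ 0 ∧ G h * b = G a) {P : Ideal R} (hP : P.IsPrime) (h1 : P.height = 1)
    {p q : Ideal R} (hq : q.IsPrime) (hpP : p.comap G = P) (hqP : q.comap G = P) : p ≤ q := by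
  intro b hb
  obtain ⟨s, hs, a, e⟩ := exists_mul_eq_of_comap_height_one G hG hbir hP h1 hpP b
  have ha : a ∈ q.comap G := by
    rw [hqP, ← hpP, Ideal.mem_comap, ← e]
    exact Ideal.mul_mem_left _ _ hb
  rw [Ideal.mem_comap, ← e] at ha
  refine (hq.mem_or_mem ha).resolve_left fun h => hs ?_
  rwa [← hqP]

end

/-- Existence of a contracted hypersurface. If every `G⁻¹ p` has height one, then `p ↦ G⁻¹ p` is
injective on the finite set of height-one primes missed by `Spec S`, hence permutes it; the
other height-one primes are of the form `G⁻¹ q` because `F` is an automorphism. So every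
height-one prime is of this form, and `R = ⋂ R_P` forces `G` to be surjective. -/
lemma exists_exceptional {R S : Type*} [CommRing R] [IsDomain R] [CommRing S] [IsDomain S]
    [Algebra ℂ R] [Algebra ℂ S] [Algebra.FiniteType ℂ R] [Algebra.FiniteType ℂ S]
    [IsIntegrallyClosed R]
    (ι : R →ₐ[ℂ] S) (hι : Function.Injective ι)
    (F : S →ₐ[ℂ] S) (hF : Function.Bijective F)
    (G : R →ₐ[ℂ] R) (hcomm : ∀ r, ι (G r) = F (ι r)) (hG : ¬ Function.Surjective G) :
    ∃ p : Ideal R, p.IsPrime ∧ p.height = 1 ∧ 2 ≤ (p.comap G).height := by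
  by_contra! hcon
  apply hG
  have : IsNoetherianRing R := Algebra.FiniteType.isNoetherianRing ℂ R
  have hGi : Function.Injective G := by
    intro x y h
    apply hι
    apply hF.1
    rw [← hcomm, ← hcomm, h]
  have hbir := birational ι hι F hF G hcomm hGi
  let f := AlgEquiv.ofBijective F hF
  have hT : ∀ p : Ideal R, p.IsPrime → p.height = 1 → (p.comap G).height = 1 := by
    intro p hp h1
    refine le_antisymm (Order.le_of_lt_succ (by simpa [one_add_one_eq_two] using hcon p hp h1)) ?_
    rw [Order.one_le_iff_ne_zero]
    intro h0
    obtain ⟨b, hb, hb0⟩ := Submodule.exists_mem_ne_zero_of_ne_bot (Ideal.ne_bot_of_height_eq_one h1)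
    obtain ⟨h, a, hh, e⟩ := hbir b
    have ha : a ∈ p.comap G := by
      rw [Ideal.mem_comap, ← e]
      exact Ideal.mul_mem_left _ _ hb
    have := hp.comap G
    have h0' : p.comap G = ⊥ := Ideal.height_eq_zero_iff_eq_bot.1 h0
    rw [h0', Ideal.mem_bot] at ha
    rw [ha, map_zero] at e
    rcases mul_eq_zero.1 e with hzero | hzero
    · exact hh (by rwa [map_eq_zero_iff G hGi] at hzero)
    · exact hb0 hzero
  -- the height one primes missed by `Spec S`
  let M : Set (Ideal R) :=
    {p | p.IsPrime ∧ p.height = 1 ∧ ∀ P : Ideal S, P.IsPrime → P.comap ι ≠ p}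
  have hMfin : M.Finite := by
    obtain ⟨r, hr, hr'⟩ := exists_forall_mem_range_comap ι hι
    refine (Ideal.finite_minimalPrimes_of_isNoetherianRing R (Ideal.span {r})).subset ?_
    rintro p ⟨hp, h1, hmiss⟩
    have hrp : r ∈ p := by
      by_contra hrp
      obtain ⟨P, hP⟩ := hr' ⟨p, hp⟩ hrp
      exact hmiss P.asIdeal P.2 (congrArg PrimeSpectrum.asIdeal hP)
    refine Ideal.mem_minimalPrimes_of_height_le (by simpa [Ideal.span_le] using hrp) ?_
    rw [h1, Order.one_le_iff_ne_zero, ne_eq, Ideal.height_eq_zero_iff_eq_bot,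
      Ideal.span_singleton_eq_bot]
    exact hr
  have hhit : ∀ P : Ideal S, P.IsPrime →
      ∃ q : Ideal R, q.IsPrime ∧ (∃ P' : Ideal S, P'.IsPrime ∧ P'.comap ι = q) ∧
        q.comap G = P.comap ι := by
    intro P hP
    have hP' : (P.comap (f.symm : S →ₐ[ℂ] S)).IsPrime := hP.comap _
    refine ⟨_, hP'.comap ι, ⟨_, hP', rfl⟩, ?_⟩
    ext x
    simp only [Ideal.mem_comap, hcomm]
    rw [show F (ι x) = f (ι x) from rfl]
    simp
  have hmaps : Set.MapsTo (fun p => p.comap G) M M := by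
    rintro p ⟨hp, h1, hmiss⟩
    refine ⟨hp.comap G, hT p hp h1, fun P hP e => ?_⟩
    obtain ⟨q, hq, ⟨P', hP', rfl⟩, e'⟩ := hhit P hP
    refine hmiss P' hP' ?_
    have hh := hT p hp h1
    exact le_antisymm
      (le_of_comap_eq_height_one (G : R →+* R) hGi hbir (hp.comap G) hh hp (e'.trans e) rfl)
      (le_of_comap_eq_height_one (G : R →+* R) hGi hbir (hp.comap G) hh hq rfl (e'.trans e))
  have hinj : Set.InjOn (fun p => p.comap G) M := by
    rintro p ⟨hp, h1, hmiss⟩ q ⟨hq, h1', hmiss'⟩ e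
    have hh := hT p hp h1
    exact le_antisymm
      (le_of_comap_eq_height_one (G : R →+* R) hGi hbir (hp.comap G) hh hq rfl e.symm)
      (le_of_comap_eq_height_one (G : R →+* R) hGi hbir (hp.comap G) hh hp e.symm rfl)
  have hsurj : Set.SurjOn (fun p => p.comap G) M M := by
    have := Finset.surjOn_of_injOn_of_card_le (s := hMfin.toFinset) (t := hMfin.toFinset)
      (fun p => p.comap G) (by simpa using hmaps) (by simpa using hinj) le_rfl
    simpa using this
  have hall : ∀ P : Ideal R, P.IsPrime → P.height = 1 → ∃ p : Ideal R, p.comap G = P := by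
    intro P hP h1
    by_cases hm : P ∈ M
    · obtain ⟨p, -, hp⟩ := hsurj hm
      exact ⟨p, hp⟩
    · have : ∃ P' : Ideal S, P'.IsPrime ∧ P'.comap ι = P := by
        by_contra! h
        exact hm ⟨hP, h1, h⟩
      obtain ⟨P', hP', rfl⟩ := this
      obtain ⟨q, -, -, hq⟩ := hhit P' hP'
      exact ⟨q, hq⟩
  intro b
  obtain ⟨h, a, hh, e⟩ := hbir b
  have hGh : G h ≠ 0 := by rwa [ne_eq, map_eq_zero_iff G hGi]
  by_cases hdvd : h ∣ a
  · obtain ⟨c, rfl⟩ := hdvd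
    exact ⟨c, (mul_left_cancel₀ hGh (e.trans (map_mul _ _ _))).symm⟩
  · obtain ⟨P, hP, h1, H⟩ := exists_height_one_of_not_dvd hh hdvd
    obtain ⟨p, hp⟩ := hall P hP h1
    obtain ⟨s, hs, a', e'⟩ := exists_mul_eq_of_comap_height_one (G : R →+* R) hGi hbir hP h1 hp b
    refine absurd (H s ⟨a', hGi ?_⟩) hs
    have hGs : G s * b = G a' := e'
    rw [map_mul, map_mul, ← e, ← hGs]
    ring

/-- The hypothesis says that `R_{G⁻¹ p} → R_p` is an isomorphism. -/
lemma height_comap_eq_of_forall {R : Type*} [CommRing R] [IsDomain R] (G : R →+* R)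
    (hG : Function.Injective G) (p : Ideal R) [hp : p.IsPrime]
    (h : ∀ b, ∃ s ∉ p.comap G, ∃ a, G s * b = G a) : (p.comap G).height = p.height := by
  let φ := Localization.localRingHom (p.comap G) p G rfl
  have hbij : Function.Bijective φ := by
    constructor
    · rw [injective_iff_map_eq_zero]
      intro x hx
      obtain ⟨a, s, rfl⟩ := IsLocalization.exists_mk'_eq (p.comap G).primeCompl x
      rw [Localization.localRingHom_mk'] at hx
      rw [IsLocalization.mk'_eq_zero_iff] at hx ⊢
      obtain ⟨⟨m, hm⟩, hx⟩ := hx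
      refine ⟨1, ?_⟩
      have hm0 : m ≠ 0 := fun h0 => hm (h0 ▸ p.zero_mem)
      have := (mul_eq_zero.1 hx).resolve_left hm0
      rw [map_eq_zero_iff G hG] at this
      simp [this]
    · intro x
      obtain ⟨b, ⟨s, hs⟩, rfl⟩ := IsLocalization.exists_mk'_eq p.primeCompl x
      obtain ⟨s1, hs1, a1, e1⟩ := h b
      obtain ⟨s2, hs2, a2, e2⟩ := h s
      have ha2 : a2 ∉ p.comap G := by
        rw [Ideal.mem_comap, ← e2]
        exact fun h => (hp.mem_or_mem h).elim hs2 hs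
      refine ⟨IsLocalization.mk' _ (a1 * s2) (⟨s1, hs1⟩ * ⟨a2, ha2⟩ : (p.comap G).primeCompl), ?_⟩
      rw [Localization.localRingHom_mk']
      rw [IsLocalization.mk'_eq_iff_eq]
      congr 1
      simp only [Submonoid.coe_mul, map_mul, ← e1, ← e2]
      ring
  have := ringKrullDim_eq_of_ringEquiv (RingEquiv.ofBijective φ hbij)
  rw [IsLocalization.AtPrime.ringKrullDim_eq_height (p.comap G),
    IsLocalization.AtPrime.ringKrullDim_eq_height p] at this
  exact_mod_cast this

/-! ### Extension of derivations -/

lemma formallySmooth_of_charZero (K L : Type*) [Field K] [Field L] [Algebra K L] [CharZero K] :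
    Algebra.FormallySmooth K L := by
  obtain ⟨s, hs⟩ := exists_isTranscendenceBasis K L
  have : Algebra.IsAlgebraic (IntermediateField.adjoin K (Set.range ((↑) : s → L))) L :=
    hs.isAlgebraic_field
  exact Algebra.FormallySmooth.of_algebraicIndependent_of_isSeparable hs.1

lemma formallySmooth_of_injective (A E : Type*) [CommRing A] [IsDomain A] [CharZero A] [Field E]
    [Algebra A E] (h : Function.Injective (algebraMap A E)) : Algebra.FormallySmooth A E := by
  have : FaithfulSMul A E := (faithfulSMul_iff_algebraMap_injective A E).2 h
  let K := FractionRing A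
  let : Algebra K E := FractionRing.liftAlgebra A E
  have : IsScalarTower A K E := FractionRing.isScalarTower_liftAlgebra A E
  have : CharZero K := charZero_of_injective_algebraMap (IsFractionRing.injective A K)
  have : Algebra.FormallySmooth K E := formallySmooth_of_charZero K E
  have : Algebra.FormallySmooth A K := .of_isLocalization (nonZeroDivisors A)
  exact .comp A K E

/-- Formal smoothness of `A → E` extends `D` to `E`: lift the identity of `E` along `E[ε] → E`,
where `E[ε]` is an `A`-algebra through `a ↦ a + ε D a`. -/
lemma exists_derivation_extension {k A E : Type*} [CommRing k] [CommRing A] [CommRing E]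
    [Algebra k A] [Algebra k E] [Algebra A E] [IsScalarTower k A E] [Algebra.FormallySmooth A E]
    (D : Derivation k A E) :
    ∃ D' : Derivation k E E, ∀ a, D' (algebraMap A E a) = D a := by
  let f : A →+* TrivSqZeroExt E E :=
    { toFun := fun a => .inl (algebraMap A E a) + .inr (D a)
      map_one' := by ext <;> simp
      map_mul' := fun a b => by
        ext
        · simp
        · rw [TrivSqZeroExt.snd_mul]
          simp only [TrivSqZeroExt.snd_add, TrivSqZeroExt.snd_inl, TrivSqZeroExt.snd_inr,
            TrivSqZeroExt.fst_add, TrivSqZeroExt.fst_inl, TrivSqZeroExt.fst_inr, zero_add,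
            add_zero, Derivation.leibniz, Algebra.smul_def, MulOpposite.smul_eq_mul_unop,
            MulOpposite.unop_op, Algebra.algebraMap_self_apply]
          ring
      map_zero' := by ext <;> simp
      map_add' := fun a b => by ext <;> simp }
  let : Algebra A (TrivSqZeroExt E E) := f.toAlgebra
  let g : TrivSqZeroExt E E →ₐ[A] E :=
    { (TrivSqZeroExt.fstHom E E E : TrivSqZeroExt E E →+* E) with
      commutes' := fun a => by simp [RingHom.algebraMap_toAlgebra, f] }
  have hg : Function.Surjective g := fun x => ⟨TrivSqZeroExt.inl x, by simp [g]⟩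
  have hn : IsNilpotent (RingHom.ker (g : TrivSqZeroExt E E →+* E)) := by
    have h2 : RingHom.ker (g : TrivSqZeroExt E E →+* E) ^ 2 = ⊥ := by
      rw [pow_two, eq_bot_iff, Ideal.mul_le]
      rintro x hx y hy
      have hx' : x.fst = 0 := hx
      have hy' : y.fst = 0 := hy
      rw [Ideal.mem_bot]
      ext <;> simp [hx', hy']
    exact ⟨2, h2⟩
  let l : E →ₐ[A] TrivSqZeroExt E E := Algebra.FormallySmooth.liftOfSurjective (AlgHom.id A E) g hg hn
  have hl : ∀ x, (l x).fst = x := fun x =>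
    Algebra.FormallySmooth.liftOfSurjective_apply (AlgHom.id A E) g hg hn x
  have hl2 : ∀ a, (l (algebraMap A E a)).snd = D a := fun a => by
    rw [l.commutes]; simp [RingHom.algebraMap_toAlgebra, f]
  have hmul : ∀ x y, (l (x * y)).snd = x * (l y).snd + y * (l x).snd := by
    intro x y
    rw [map_mul, TrivSqZeroExt.snd_mul, hl, hl]
    simp [mul_comm]
  let lin : E →ₗ[k] E :=
    { toFun := fun x => (l x).snd
      map_add' := fun x y => by rw [map_add, TrivSqZeroExt.snd_add]
      map_smul' := fun c x => by
        rw [Algebra.smul_def, hmul, IsScalarTower.algebraMap_apply k A E, hl2]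
        simp [Algebra.smul_def, IsScalarTower.algebraMap_apply k A E] }
  exact ⟨Derivation.mk' lin hmul, hl2⟩

/-- The values of a derivation of a finitely generated algebra have a common denominator. -/
lemma exists_clear_denominators {k A K : Type*} [CommRing k] [CommRing A] [IsDomain A] [Field K]
    [Algebra k A] [Algebra k K] [Algebra A K] [IsScalarTower k A K] [IsFractionRing A K]
    [Algebra.FiniteType k A] (D : Derivation k A K) :
    ∃ g : A, g ≠ 0 ∧ ∀ a, ∃ a', g • D a = algebraMap A K a' := by
  classical
  obtain ⟨s, hs⟩ := Algebra.FiniteType.out (R := k) (A := A)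
  obtain ⟨⟨g, hg⟩, hg'⟩ := IsLocalization.exist_integer_multiples_of_finset (nonZeroDivisors A)
    (s.image D)
  refine ⟨g, nonZeroDivisors.ne_zero hg, fun a => ?_⟩
  have ha : a ∈ Algebra.adjoin k (s : Set A) := hs ▸ Algebra.mem_top
  induction ha using Algebra.adjoin_induction with
  | mem x hx =>
    obtain ⟨a', ha'⟩ := hg' (D x) (Finset.mem_image_of_mem _ hx)
    exact ⟨a', ha'.symm⟩
  | algebraMap r => exact ⟨0, by simp⟩
  | add x y _ _ hx hy =>
    obtain ⟨x', hx⟩ := hx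
    obtain ⟨y', hy⟩ := hy
    exact ⟨x' + y', by rw [map_add, smul_add, hx, hy, map_add]⟩
  | mul x y _ _ hx hy =>
    obtain ⟨x', hx⟩ := hx
    obtain ⟨y', hy⟩ := hy
    refine ⟨x * y' + y * x', ?_⟩
    rw [Derivation.leibniz, smul_add, smul_comm, hy, smul_comm g y, hx]
    simp [Algebra.smul_def]

/-- If `g D` takes values in `A`, then it is a derivation of `A`. -/
lemma exists_derivation_of_forall {k A K : Type*} [CommRing k] [CommRing A] [Field K]
    [Algebra k A] [Algebra k K] [Algebra A K] [IsScalarTower k A K]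
    (hinj : Function.Injective (algebraMap A K)) (D : Derivation k A K) (g : A)
    (hg : ∀ a, ∃ a', g • D a = algebraMap A K a') :
    ∃ θ : Derivation k A A, ∀ a, algebraMap A K (θ a) = g • D a := by
  choose f hf using hg
  let lin : A →ₗ[k] A :=
    { toFun := f
      map_add' := fun x y => hinj (by rw [← hf, map_add, map_add, ← hf, ← hf, smul_add])
      map_smul' := fun c x => hinj (by
        rw [← hf, Derivation.map_smul, RingHom.id_apply, Algebra.smul_def c (f x), map_mul, ← hf,
          ← IsScalarTower.algebraMap_apply k A K, ← Algebra.smul_def, smul_comm]) }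
  refine ⟨Derivation.mk' lin fun a b => hinj ?_, fun a => (hf a).symm⟩
  simp only [LinearMap.coe_mk, AddHom.coe_mk, lin, smul_eq_mul]
  rw [← hf, Derivation.leibniz, map_add, map_mul, map_mul, ← hf, ← hf]
  simp only [Algebra.smul_def]
  ring

/-- In characteristic zero, derivations extend along injections of domains, with values in the
fraction field of the larger one. -/
lemma exists_derivation_field_extension {B A K : Type*} [CommRing B] [IsDomain B]
    [CommRing A] [IsDomain A] [Field K] [Algebra ℂ B] [Algebra ℂ A] [Algebra ℂ K] [Algebra A K]
    [IsScalarTower ℂ A K] [IsFractionRing A K] [Algebra B A] [IsScalarTower ℂ B A]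
    [Algebra B K] [IsScalarTower B A K] [IsScalarTower ℂ B K]
    (hBA : Function.Injective (algebraMap B A)) (D : Derivation ℂ B K) :
    ∃ D' : Derivation ℂ A K, ∀ b, D' (algebraMap B A b) = D b := by
  have hinj : Function.Injective (algebraMap B K) := by
    rw [IsScalarTower.algebraMap_eq B A K]
    exact (IsFractionRing.injective A K).comp hBA
  have : CharZero B := charZero_of_injective_algebraMap (algebraMap ℂ B).injective
  have := formallySmooth_of_injective B K hinj
  obtain ⟨D', hD'⟩ := exists_derivation_extension D
  refine ⟨D'.compAlgebraMap A, fun b => ?_⟩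
  rw [Derivation.compAlgebraMap_apply, ← IsScalarTower.algebraMap_apply, hD']

lemma exists_derivation_smul {B A K : Type*} [CommRing B] [IsDomain B]
    [CommRing A] [IsDomain A] [Field K] [Algebra ℂ B] [Algebra ℂ A] [Algebra ℂ K] [Algebra A K]
    [IsScalarTower ℂ A K] [IsFractionRing A K] [Algebra B A] [IsScalarTower ℂ B A]
    [Algebra B K] [IsScalarTower B A K] [IsScalarTower ℂ B K] [Algebra.FiniteType ℂ A]
    (hBA : Function.Injective (algebraMap B A)) (D : Derivation ℂ B K) :
    ∃ g : A, g ≠ 0 ∧ ∃ θ : Derivation ℂ A A,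
      ∀ b, algebraMap A K (θ (algebraMap B A b)) = g • D b := by
  obtain ⟨D', hD'⟩ := exists_derivation_field_extension hBA D
  obtain ⟨g, hg, hg'⟩ := exists_clear_denominators D'
  obtain ⟨θ, hθ⟩ := exists_derivation_of_forall (IsFractionRing.injective A K) D' g hg'
  exact ⟨g, hg, θ, fun b => by rw [hθ, hD']⟩

/-- A derivation of `A` lifts to `S` after multiplication by a nonzero `Δ`. -/
lemma exists_derivation_lift {A S : Type*} [CommRing A] [IsDomain A] [CommRing S] [IsDomain S]
    [Algebra ℂ A] [Algebra ℂ S] [Algebra A S] [IsScalarTower ℂ A S] [Algebra.FiniteType ℂ S]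
    (hinj : Function.Injective (algebraMap A S)) (θ : Derivation ℂ A A) :
    ∃ Δ : S, Δ ≠ 0 ∧ ∃ Θ : Derivation ℂ S S,
      ∀ a, Θ (algebraMap A S a) = Δ * algebraMap A S (θ a) := by
  let K := FractionRing S
  let l : A →ₗ[A] K := (Algebra.linearMap S K).restrictScalars A ∘ₗ Algebra.linearMap A S
  obtain ⟨Δ, hΔ, Θ, hΘ⟩ := exists_derivation_smul (K := K) hinj (l.compDer θ)
  refine ⟨Δ, hΔ, Θ, fun a => IsFractionRing.injective S K ?_⟩
  rw [hΘ]
  simp [l, Algebra.smul_def]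

/-- A nonzero multiple of `∂ / ∂xᵢ` extends from the polynomial ring to `A`. -/
lemma exists_partial {ι A : Type*} [CommRing A] [IsDomain A] [Algebra ℂ A]
    [Algebra (MvPolynomial ι ℂ) A] [IsScalarTower ℂ (MvPolynomial ι ℂ) A] [Algebra.FiniteType ℂ A]
    (hinj : Function.Injective (algebraMap (MvPolynomial ι ℂ) A)) (i : ι) :
    ∃ g : A, g ≠ 0 ∧ ∃ θ : Derivation ℂ A A, ∀ f : MvPolynomial ι ℂ,
      θ (algebraMap _ A f) = g * algebraMap _ A (MvPolynomial.pderiv i f) := by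
  let K := FractionRing A
  let l : MvPolynomial ι ℂ →ₗ[MvPolynomial ι ℂ] K :=
    (Algebra.linearMap A K).restrictScalars _ ∘ₗ Algebra.linearMap _ A
  obtain ⟨g, hg, θ, hθ⟩ := exists_derivation_smul (K := K) hinj (l.compDer (MvPolynomial.pderiv i))
  refine ⟨g, hg, θ, fun a => IsFractionRing.injective A K ?_⟩
  rw [hθ]
  simp [l, Algebra.smul_def]

/-! ### Ideals stable under derivations -/

/-- Elements divisible by every power of `t` in `A_p` vanish, by Krull's intersection theorem. -/
lemma eq_zero_of_divisible {A : Type*} [CommRing A] [IsDomain A] [IsNoetherianRing A]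
    {p : Ideal A} [p.IsPrime] {t u : A} (ht : t ∈ p) (hu : u ∉ p) (T : Set A)
    (hT : ∀ x ∈ T, ∃ x' ∈ T, u * x = t * x') : ∀ x ∈ T, x = 0 := by
  let L := Localization.AtPrime p
  have hpow : ∀ n, ∀ x ∈ T, algebraMap A L x ∈ IsLocalRing.maximalIdeal L ^ n := by
    intro n
    induction n with
    | zero => simp
    | succ n ih =>
      intro x hx
      obtain ⟨x', hx', e⟩ := hT x hx
      have hU : IsUnit (algebraMap A L u) :=
        IsLocalization.map_units L (⟨u, hu⟩ : p.primeCompl)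
      rw [← Ideal.unit_mul_mem_iff_mem _ hU, ← map_mul, e, map_mul, pow_succ']
      refine Ideal.mul_mem_mul ?_ (ih x' hx')
      rwa [← IsLocalization.AtPrime.to_map_mem_maximal_iff L p] at ht
  intro x hx
  have h0 : algebraMap A L x ∈ (⨅ n : ℕ, IsLocalRing.maximalIdeal L ^ n : Ideal L) := by
    simpa [Submodule.mem_iInf] using fun n => hpow n x hx
  rw [Ideal.iInf_pow_eq_bot_of_isLocalRing _ (Ideal.IsPrime.ne_top'), Ideal.mem_bot] at h0
  exact (IsLocalization.injective L p.primeCompl_le_nonZeroDivisors) (by rw [h0, map_zero])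

lemma derivation_eq_zero_of_isTranscendenceBasis {B σ : Type*} [CommRing B] [IsDomain B]
    [Algebra ℂ B] {y : σ → B} (hy : IsTranscendenceBasis ℂ y) (D : Derivation ℂ B B)
    (hD : ∀ i, D (y i) = 0) : D = 0 := by
  classical
  let A0 := Algebra.adjoin ℂ (Set.range y)
  have hA0 : ∀ a : A0, D (a : B) = 0 := by
    rintro ⟨a, ha⟩
    have h2 : Set.EqOn D (0 : Derivation ℂ B B) (Algebra.adjoin ℂ (Set.range y)) :=
      Derivation.eqOn_adjoin (by rintro _ ⟨i, rfl⟩; simpa using hD i)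
    simpa using h2 ha
  let lin : B →ₗ[A0] B :=
    { toFun := D
      map_add' := map_add D
      map_smul' := fun c x => by
        rw [Subalgebra.smul_def, smul_eq_mul, D.leibniz, hA0]
        simp [Subalgebra.smul_def] }
  -- differentiating a minimal relation `f(b) = 0` gives `(∂f)(b) D b = 0`
  let D0 : Derivation A0 B B := Derivation.mk' lin fun a b => D.leibniz a b
  have halg : Algebra.IsAlgebraic A0 B := hy.isAlgebraic
  ext b
  have hn : ∃ n, ∃ f : Polynomial A0, f ≠ 0 ∧ Polynomial.aeval b f = 0 ∧ f.natDegree = n := by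
    obtain ⟨f, h1, h2⟩ := halg.isAlgebraic b
    exact ⟨_, f, h1, h2, rfl⟩
  obtain ⟨f, hf, hfb, hdeg⟩ := Nat.find_spec hn
  have hA0inj : Function.Injective (algebraMap A0 B) := Subtype.val_injective
  have hdpos : f.natDegree ≠ 0 := by
    intro h
    rw [Polynomial.eq_C_of_natDegree_eq_zero h, Polynomial.aeval_C] at hfb
    apply hf
    rw [Polynomial.eq_C_of_natDegree_eq_zero h, (map_eq_zero_iff _ hA0inj).1 hfb, map_zero]
  have : CharZero A0 := charZero_of_injective_algebraMap (algebraMap ℂ A0).injective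
  have hd : Polynomial.aeval b f.derivative ≠ 0 := by
    intro h
    refine Nat.find_min hn (hdeg ▸ Polynomial.natDegree_derivative_lt hdpos)
      ⟨f.derivative, ?_, h, rfl⟩
    intro h0
    exact hdpos (Polynomial.derivative_eq_zero.1 h0)
  have h3 := D0.map_aeval f b
  rw [hfb, map_zero, smul_eq_mul] at h3
  exact (mul_eq_zero.1 h3.symm).resolve_left hd

/-- A nonzero element of `p` together with lifts of algebraically independent elements of `A ⧸ p` is
an algebraically independent family. -/
lemma algebraicIndependent_option {A σ : Type*} [CommRing A] [IsDomain A] [Algebra ℂ A]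
    {p : Ideal A} [p.IsPrime] {t : A} (ht : t ∈ p) (ht0 : t ≠ 0) {y : σ → A}
    (hy : AlgebraicIndependent ℂ fun i => Ideal.Quotient.mk p (y i)) :
    AlgebraicIndependent ℂ fun o : Option σ => o.elim t y := by
  have hker : ∀ a ∈ Algebra.adjoin ℂ (Set.range y), a ∈ p → a = 0 := by
    intro a ha hap
    rw [Algebra.adjoin_range_eq_range_aeval] at ha
    obtain ⟨f, rfl⟩ := ha
    have h1 : MvPolynomial.aeval (fun i => Ideal.Quotient.mk p (y i)) f = 0 := by
      rw [← Ideal.Quotient.eq_zero_iff_mem] at hap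
      rw [← hap]
      exact MvPolynomial.aeval_algebraMap_apply (R := ℂ) (A ⧸ p) y f
    rw [hy.eq_zero_of_aeval_eq_zero f h1]
    simp
  have hy' : AlgebraicIndependent ℂ y := by
    refine AlgebraicIndependent.of_comp (Ideal.Quotient.mkₐ ℂ p) hy
  rw [hy'.option_iff_transcendental, transcendental_iff]
  intro f
  induction hd : f.natDegree using Nat.strong_induction_on generalizing f with
  | _ n ih =>
    intro hf
    have e := f.divX_mul_X_add
    have hc : f.coeff 0 = 0 := by
      have h1 := hf
      rw [← e] at h1
      simp only [map_add, map_mul, Polynomial.aeval_X, Polynomial.aeval_C] at h1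
      have h2 : algebraMap (Algebra.adjoin ℂ (Set.range y)) A (f.coeff 0) ∈ p := by
        rw [eq_neg_of_add_eq_zero_right h1]
        exact p.neg_mem (p.mul_mem_left _ ht)
      exact Subtype.ext (hker _ (f.coeff 0).2 h2)
    have h1 := hf
    rw [← e] at h1
    simp only [map_mul, Polynomial.aeval_X, hc, map_zero, add_zero] at h1
    have h2 := (mul_eq_zero.1 h1).resolve_right ht0
    rcases Nat.eq_zero_or_pos f.natDegree with h | h
    · rw [Polynomial.eq_C_of_natDegree_eq_zero h, hc, map_zero]
    · have := ih _ (by rw [Polynomial.natDegree_divX_eq_natDegree_tsub_one]; omega) f.divX rfl h2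
      rw [← e, this, hc]
      simp

/-- A prime with a uniformizer `t` admits a vector field transversal to it. Let `D` be a derivation
into the fraction field extending `∂ / ∂t`, in coordinates consisting of `t` and lifts `y` of a
transcendence basis of `A ⧸ p`. If an integral multiple `g D` preserves `p`, then it induces zero
on `A ⧸ p`, because it kills `y`; hence it is divisible by `t` over `A_p`. This cannot
continue indefinitely, so some `g D` has `g D t = g ∉ p`. -/
lemma exists_transversal_derivation {A : Type*} [CommRing A] [IsDomain A] [Algebra ℂ A]
    [Algebra.FiniteType ℂ A] [IsNoetherianRing A] {p : Ideal A} [p.IsPrime] {t u : A} (ht : t ∈ p)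
    (ht0 : t ≠ 0) (hu : u ∉ p) (H : ∀ s ∈ p, t ∣ u * s) :
    ∃ θ : Derivation ℂ A A, θ t ∉ p := by
  classical
  obtain ⟨σ, hσ⟩ := exists_isTranscendenceBasis ℂ (A ⧸ p)
  choose y hy using fun i : σ => Ideal.Quotient.mk_surjective (i : A ⧸ p)
  have hyb : IsTranscendenceBasis ℂ fun i : σ => Ideal.Quotient.mk p (y i) := by
    simpa only [hy] using hσ
  have hind := algebraicIndependent_option ht ht0 hyb.1
  let B := MvPolynomial (Option σ) ℂ
  let : Algebra B A := (MvPolynomial.aeval (R := ℂ) fun o : Option σ => o.elim t y).toAlgebra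
  have : IsScalarTower ℂ B A := IsScalarTower.of_algHom _
  have hBA : Function.Injective (algebraMap B A) := hind
  let K := FractionRing A
  have hK := IsFractionRing.injective A K
  let l : B →ₗ[B] K := (Algebra.linearMap A K).restrictScalars _ ∘ₗ Algebra.linearMap _ A
  obtain ⟨D, hD⟩ := exists_derivation_field_extension (K := K) hBA
    (l.compDer (MvPolynomial.pderiv none))
  have hDt : D t = 1 := by
    have h := hD (MvPolynomial.X none)
    rw [show algebraMap B A (MvPolynomial.X none) = t from MvPolynomial.aeval_X _ _] at h
    rw [h]
    change l (MvPolynomial.pderiv none (MvPolynomial.X none)) = 1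
    rw [MvPolynomial.pderiv_X_self]
    simp [l]
  have hDy : ∀ i, D (y i) = 0 := fun i => by
    have h := hD (MvPolynomial.X (some i))
    rw [show algebraMap B A (MvPolynomial.X (some i)) = y i from MvPolynomial.aeval_X _ _] at h
    rw [h]
    change l (MvPolynomial.pderiv none (MvPolynomial.X (some i))) = 0
    rw [MvPolynomial.pderiv_X_of_ne (by simp), map_zero]
  obtain ⟨g₀, hg₀, hg₀'⟩ := exists_clear_denominators D
  by_contra! hcon
  refine hg₀ (eq_zero_of_divisible ht hu {g | ∀ a, ∃ a', g • D a = algebraMap A K a'} ?_ g₀ hg₀')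
  intro g hg
  obtain ⟨θ, hθ⟩ := exists_derivation_of_forall hK D g hg
  have hθt : θ t = g := hK (by rw [hθ, hDt, Algebra.smul_def, mul_one])
  have hgp : g ∈ p := hθt ▸ hcon θ
  have hmem : ∀ s ∈ p, θ s ∈ p := by
    intro s hs
    obtain ⟨s', e⟩ := H s hs
    have h1 := congrArg θ e
    rw [θ.leibniz, θ.leibniz, hθt] at h1
    have h2 : u * θ s ∈ p := by
      have : u * θ s = t * θ s' + s' * g - s * θ u := by
        simp only [smul_eq_mul] at h1; linear_combination h1
      rw [this]
      exact p.sub_mem (p.add_mem (p.mul_mem_right _ ht) (p.mul_mem_left _ hgp))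
        (p.mul_mem_right _ hs)
    exact ((‹p.IsPrime›).mem_or_mem h2).resolve_left hu
  let lin : (A ⧸ p) →ₗ[ℂ] (A ⧸ p) :=
    (p.restrictScalars ℂ).mapQ (p.restrictScalars ℂ) (θ : A →ₗ[ℂ] A) hmem
  have hlin : ∀ a, lin (Ideal.Quotient.mk p a) = Ideal.Quotient.mk p (θ a) := fun a => rfl
  let θ' : Derivation ℂ (A ⧸ p) (A ⧸ p) := Derivation.mk' lin fun a b => by
    obtain ⟨a, rfl⟩ := Ideal.Quotient.mk_surjective a
    obtain ⟨b, rfl⟩ := Ideal.Quotient.mk_surjective b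
    rw [← map_mul, hlin, hlin, hlin, θ.leibniz]
    simp
  have hθ' : θ' = 0 := derivation_eq_zero_of_isTranscendenceBasis hyb θ' fun i => by
    have h0 : θ (y i) = 0 := hK (by rw [hθ, hDy, smul_zero, map_zero])
    change lin _ = 0
    rw [hlin, h0, map_zero]
  have hall : ∀ a, θ a ∈ p := fun a => by
    rw [← Ideal.Quotient.eq_zero_iff_mem, ← hlin]
    exact congrArg (fun d : Derivation ℂ (A ⧸ p) (A ⧸ p) => d (Ideal.Quotient.mk p a)) hθ'
  obtain ⟨g', e⟩ := H g hgp
  refine ⟨g', fun a => ?_, e⟩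
  obtain ⟨a', ea⟩ := H _ (hall a)
  refine ⟨a', ?_⟩
  have ht' : algebraMap A K t ≠ 0 := by rwa [Ne, map_eq_zero_iff _ hK]
  apply mul_left_cancel₀ ht'
  rw [← map_mul, ← ea, map_mul, hθ, Algebra.smul_def, Algebra.smul_def, ← mul_assoc, ← mul_assoc,
    ← map_mul, ← map_mul, e]

/-- A nonzero ideal of a normal affine domain that is stable under all derivations is contained in
no prime of height one: a transversal derivation lowers the order of vanishing along `p`. -/
lemma not_le_of_forall_derivation_mem {A : Type*} [CommRing A] [IsDomain A] [Algebra ℂ A]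
    [Algebra.FiniteType ℂ A] [IsNoetherianRing A] [IsIntegrallyClosed A] (c : Ideal A)
    (hc0 : c ≠ ⊥) (hc : ∀ θ : Derivation ℂ A A, ∀ x ∈ c, θ x ∈ c) (p : Ideal A) (hp : p.IsPrime)
    (h1 : p.height = 1) : ¬ c ≤ p := by
  obtain ⟨t, ht, ht0, u, hu, H⟩ := exists_uniformizer hp h1
  obtain ⟨θ, hθ⟩ := exists_transversal_derivation ht ht0 hu H
  intro hcp
  obtain ⟨x₀, hx₀, hx₀0⟩ := Submodule.exists_mem_ne_zero_of_ne_bot hc0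
  have key : ∃ k, ∃ y, y ∉ p ∧ t ^ k * y ∈ c := by
    by_contra! hcon
    refine hx₀0 (eq_zero_of_divisible ht hu {y | ∃ k, t ^ k * y ∈ c} ?_ x₀ ⟨0, by simpa using hx₀⟩)
    rintro y ⟨k, hk⟩
    obtain ⟨y', e⟩ := H y (by by_contra h; exact hcon k y h hk)
    refine ⟨y', ⟨k + 1, ?_⟩, e⟩
    rw [pow_succ, mul_assoc, ← e, mul_left_comm]
    exact c.mul_mem_left _ hk
  obtain ⟨k, hk⟩ := key
  induction k with
  | zero =>
    obtain ⟨y, hy, h⟩ := hk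
    exact hy (hcp (by simpa using h))
  | succ k ih =>
    obtain ⟨y, hy, h⟩ := hk
    apply ih
    refine ⟨((k + 1 : ℕ) : A) * (y ^ 2 * θ t), ?_, ?_⟩
    · have hk0 : ((k + 1 : ℕ) : A) ∉ p := by
        intro hmem
        have hU : IsUnit ((k + 1 : ℕ) : A) := by
          have := (IsUnit.mk0 ((k + 1 : ℕ) : ℂ) (by exact_mod_cast Nat.succ_ne_zero k)).map
            (algebraMap ℂ A)
          simpa using this
        exact hp.ne_top (Ideal.eq_top_of_isUnit_mem _ hmem hU)
      intro hmem
      rcases hp.mem_or_mem hmem with h | h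
      · exact hk0 h
      rcases hp.mem_or_mem h with h | h
      · exact hy (hp.mem_of_pow_mem _ h)
      · exact hθ h
    · have h2 := c.mul_mem_left y (hc θ _ h)
      rw [θ.leibniz, θ.leibniz_pow] at h2
      have h3 := c.sub_mem h2 (c.mul_mem_left (θ y) h)
      convert h3 using 1
      simp only [smul_eq_mul, nsmul_eq_mul, Nat.add_sub_cancel]
      ring

/-! ### Evaluation of power series at a closed point -/

section

open TensorProduct

/-- A derivation of `A` whose restriction to `P` is `∑ cᵢ dᵢ` extends to `A ⊗[P] H`, given
extensions `Dᵢ` of the `dᵢ` to `H`. -/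
lemma exists_tensor_derivation {k P A H ι : Type*} [Fintype ι] [CommRing k] [CommRing P]
    [CommRing A] [CommRing H] [Algebra k P] [Algebra k A] [Algebra k H] [Algebra P A] [Algebra P H]
    (θ : Derivation k A A) (d : ι → Derivation k P P) (D : ι → Derivation k H H) (c : ι → A)
    (hθ : ∀ p, θ (algebraMap P A p) = ∑ i, algebraMap P A (d i p) * c i)
    (hD : ∀ i p, D i (algebraMap P H p) = algebraMap P H (d i p)) :
    ∃ T : A ⊗[P] H →+ A ⊗[P] H,
      (∀ a f, T (a ⊗ₜ f) = θ a ⊗ₜ f + ∑ i, (a * c i) ⊗ₜ D i f) ∧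
      ∀ x y, T (x * y) = x * T y + y * T x := by
  let B : A →+ H →+ A ⊗[P] H := AddMonoidHom.mk' (fun a => AddMonoidHom.mk'
      (fun f => θ a ⊗ₜ f + ∑ i, (a * c i) ⊗ₜ D i f) (fun f g => by
        simp only [tmul_add, map_add, Finset.sum_add_distrib]; abel)) (fun a b => by
        ext f
        simp only [AddMonoidHom.mk'_apply, AddMonoidHom.add_apply, map_add, add_tmul, add_mul,
          Finset.sum_add_distrib]
        abel)
  have hB : ∀ (r : P) a f, B (r • a) f = B a (r • f) := by
    intro r a f
    simp only [B, AddMonoidHom.mk'_apply]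
    simp only [Algebra.smul_def, Derivation.leibniz, hD, hθ, Algebra.algebraMap_self_apply, tmul_add, add_tmul,
      Finset.sum_add_distrib, Finset.mul_sum, sum_tmul]
    have h1 : ∀ (r : P) (a : A) (f : H), a ⊗ₜ[P] (f * algebraMap P H r) =
        (algebraMap P A r * a) ⊗ₜ[P] f := by
      intro r a f
      rw [mul_comm f, ← Algebra.smul_def, ← Algebra.smul_def, smul_tmul]
    have h2 : ∀ (r : P) (a : A) (f : H), a ⊗ₜ[P] (algebraMap P H r * f) =
        (algebraMap P A r * a) ⊗ₜ[P] f := by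
      intro r a f
      rw [← Algebra.smul_def, ← Algebra.smul_def, smul_tmul]
    simp only [h1, h2, mul_assoc, mul_left_comm, mul_comm]
    abel
  let T : A ⊗[P] H →+ A ⊗[P] H := TensorProduct.liftAddHom B hB
  have hT : ∀ a f, T (a ⊗ₜ f) = θ a ⊗ₜ f + ∑ i, (a * c i) ⊗ₜ D i f := fun a f => by
    simp only [T, TensorProduct.liftAddHom_tmul]; rfl
  refine ⟨T, hT, fun x y => ?_⟩
  induction x using TensorProduct.induction_on with
  | zero => simp
  | add x x' hx hx' => rw [add_mul, map_add, hx, hx', map_add]; ring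
  | tmul a f =>
    induction y using TensorProduct.induction_on with
    | zero => simp
    | add y y' hy hy' => rw [mul_add, map_add, hy, hy', map_add]; ring
    | tmul b g =>
      rw [Algebra.TensorProduct.tmul_mul_tmul, hT, hT, hT]
      simp only [Derivation.leibniz, smul_eq_mul, tmul_add, add_tmul, mul_add,
        Finset.sum_add_distrib, Finset.mul_sum, Algebra.TensorProduct.tmul_mul_tmul]
      simp only [mul_comm, mul_left_comm]
      abel

lemma derivation_chain_rule {σ A : Type*} [Fintype σ] [CommRing A] [Algebra ℂ A]
    [Algebra (MvPolynomial σ ℂ) A] [IsScalarTower ℂ (MvPolynomial σ ℂ) A] (θ : Derivation ℂ A A)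
    (f : MvPolynomial σ ℂ) :
    θ (algebraMap _ A f) = ∑ i, algebraMap _ A (MvPolynomial.pderiv i f) *
      θ (algebraMap (MvPolynomial σ ℂ) A (MvPolynomial.X i)) := by
  classical
  induction f using MvPolynomial.induction_on with
  | C a =>
    rw [← MvPolynomial.algebraMap_eq, ← IsScalarTower.algebraMap_apply]
    simp
  | add p q hp hq => simp only [map_add, hp, hq, add_mul, Finset.sum_add_distrib]
  | mul_X p i hp =>
    simp only [map_mul, Derivation.leibniz, hp, smul_eq_mul, map_add, add_mul,
      Finset.sum_add_distrib, Finset.mul_sum]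
    congr 1
    · rw [Finset.sum_eq_single i]
      · simp
      · intro j _ hj
        rw [MvPolynomial.pderiv_X_of_ne (Ne.symm hj)]; simp
      · simp
    · simp only [mul_assoc]

/-- The evaluations `φ n : A ⊗ ℂ⟦x⟧ → S ⧸ Q ^ n`, for coordinates `x` that vanish at `Q`. -/
lemma exists_eval_completion {σ A S : Type*} [Finite σ] [CommRing A] [CommRing S]
    [Algebra (MvPolynomial σ ℂ) A] [Algebra (MvPolynomial σ ℂ) S] [Algebra A S]
    [IsScalarTower (MvPolynomial σ ℂ) A S] (Q : Ideal S)
    (hQ : ∀ i, algebraMap (MvPolynomial σ ℂ) S (MvPolynomial.X i) ∈ Q) :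
    ∃ φ : ∀ n : ℕ, A ⊗[MvPolynomial σ ℂ] MvPowerSeries σ ℂ →ₐ[A] S ⧸ Q ^ n,
      ∀ n a f, φ n (a ⊗ₜ f) = Ideal.Quotient.mk (Q ^ n)
        (algebraMap A S a * algebraMap (MvPolynomial σ ℂ) S (f.truncTotal n)) := by
  have hle : ∀ n, MvPolynomial.idealOfVars σ ℂ ^ n ≤
      (Q ^ n).comap (Algebra.ofId (MvPolynomial σ ℂ) S) := by
    intro n
    refine le_trans (Ideal.pow_right_mono ?_ n) (Ideal.le_comap_pow _ n)
    rw [MvPolynomial.idealOfVars, Ideal.span_le]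
    rintro _ ⟨i, rfl⟩
    exact hQ i
  refine ⟨fun n => Algebra.TensorProduct.lift (Algebra.ofId A (S ⧸ Q ^ n))
    ((Ideal.quotientMapₐ (Q ^ n) (Algebra.ofId (MvPolynomial σ ℂ) S) (hle n)).comp
      (MvPowerSeries.truncTotalAlgHom σ ℂ n)) (fun _ _ => .all _ _), fun n a f => ?_⟩
  rw [Algebra.TensorProduct.lift_tmul, map_mul]
  rfl

lemma truncTotal_succ_pderiv {σ : Type*} [Finite σ] (f : MvPowerSeries σ ℂ) (i : σ) (n : ℕ) :
    MvPolynomial.pderiv i (f.truncTotal (n + 1)) = (MvPowerSeries.pderiv ℂ i f).truncTotal n := by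
  apply MvPolynomial.coe_injective
  rw [← MvPowerSeries.pderiv_coe]
  ext d
  have hdeg : (d + Finsupp.single i 1).degree = d.degree + 1 := by
    rw [map_add, Finsupp.degree_single]
  rw [MvPowerSeries.coeff_pderiv, MvPolynomial.coeff_coe, MvPolynomial.coeff_coe]
  by_cases hd : d.degree < n
  · rw [MvPowerSeries.coeff_truncTotal _ hd, MvPowerSeries.coeff_truncTotal,
      MvPowerSeries.coeff_pderiv]
    omega
  · rw [MvPowerSeries.coeff_truncTotal_eq_zero _ (by omega : n + 1 ≤ _),
      MvPowerSeries.coeff_truncTotal_eq_zero _ (by omega : n ≤ _), zero_mul]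

lemma derivation_mem_pow {S : Type*} [CommRing S] [Algebra ℂ S] (Θ : Derivation ℂ S S)
    (Q : Ideal S) (n : ℕ) : ∀ s ∈ Q ^ (n + 1), Θ s ∈ Q ^ n := by
  induction n with
  | zero => simp
  | succ n ih =>
    intro s hs
    rw [pow_succ] at hs
    refine Submodule.mul_induction_on hs (fun x hx y hy => ?_) (fun x y hx hy => ?_)
    · rw [Θ.leibniz, smul_eq_mul, smul_eq_mul, mul_comm y]
      refine add_mem (Ideal.mul_mem_right _ _ hx) ?_
      rw [pow_succ]
      exact Ideal.mul_mem_mul (ih x hx) hy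
    · rw [map_add]; exact add_mem hx hy

/-- Artin–Rees: division by `Δ` costs a bounded power of `Q`. -/
lemma mem_pow_of_mul_mem_pow {S : Type*} [CommRing S] [IsDomain S] [IsNoetherianRing S]
    (Q : Ideal S) {Δ : S} (hΔ : Δ ≠ 0) : ∃ c, ∀ n s, Δ * s ∈ Q ^ (n + c) → s ∈ Q ^ n := by
  obtain ⟨c, hc⟩ := Ideal.exists_pow_inf_eq_pow_smul Q (Ideal.span {Δ})
  refine ⟨c, fun n s hs => ?_⟩
  have h1 := hc (n + c) (by omega)
  have h2 : Δ * s ∈ (Q ^ (n + c) • ⊤ ⊓ Ideal.span {Δ} : Ideal S) :=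
    ⟨by simpa using hs, Ideal.mul_mem_right _ _ (Ideal.mem_span_singleton_self Δ)⟩
  rw [h1, Nat.add_sub_cancel] at h2
  have h3 : Δ * s ∈ Q ^ n * Ideal.span {Δ} :=
    (Submodule.smul_mono le_rfl inf_le_right) h2
  rw [Ideal.mem_mul_span_singleton] at h3
  obtain ⟨z, hz, e⟩ := h3
  rwa [mul_left_cancel₀ hΔ (by rw [← e, mul_comm] : Δ * s = Δ * z)]

section Completion

variable {σ A S : Type*} [Fintype σ] [CommRing A] [CommRing S]
  [Algebra (MvPolynomial σ ℂ) A] [Algebra (MvPolynomial σ ℂ) S] [Algebra A S] {Q : Ideal S}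
  {φ : ∀ n : ℕ, A ⊗[MvPolynomial σ ℂ] MvPowerSeries σ ℂ →ₐ[A] S ⧸ Q ^ n}

lemma algebraMap_mem_pow {σ S : Type*} [CommRing S] [Algebra (MvPolynomial σ ℂ) S] {Q : Ideal S}
    (hQ : ∀ i, algebraMap (MvPolynomial σ ℂ) S (MvPolynomial.X i) ∈ Q)
    (n : ℕ) {f : MvPolynomial σ ℂ} (hf : f ∈ MvPolynomial.idealOfVars σ ℂ ^ n) :
    algebraMap _ S f ∈ Q ^ n := by
  have : MvPolynomial.idealOfVars σ ℂ ≤ Q.comap (algebraMap _ S) := by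
    rw [MvPolynomial.idealOfVars, Ideal.span_le]
    rintro _ ⟨i, rfl⟩
    exact hQ i
  exact Ideal.le_comap_pow _ n (Ideal.pow_right_mono this n hf)

/-- The evaluations are compatible with the projections `S ⧸ Q ^ m → S ⧸ Q ^ n`. -/
lemma eval_transition (hQ : ∀ i, algebraMap (MvPolynomial σ ℂ) S (MvPolynomial.X i) ∈ Q)
    (hφ : ∀ n a f, φ n (a ⊗ₜ f) = Ideal.Quotient.mk (Q ^ n)
        (algebraMap A S a * algebraMap (MvPolynomial σ ℂ) S (f.truncTotal n)))
    {n m : ℕ} (hnm : n ≤ m) (x : A ⊗[MvPolynomial σ ℂ] MvPowerSeries σ ℂ) {s : S}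
    (hs : φ m x = Ideal.Quotient.mk _ s) : φ n x = Ideal.Quotient.mk _ s := by
  have key : ∃ s, φ m x = Ideal.Quotient.mk _ s ∧ φ n x = Ideal.Quotient.mk _ s := by
    clear hs
    induction x using TensorProduct.induction_on with
    | zero => exact ⟨0, by simp, by simp⟩
    | add x y hx hy =>
      obtain ⟨s, h1, h2⟩ := hx
      obtain ⟨t, h3, h4⟩ := hy
      exact ⟨s + t, by simp [h1, h3], by simp [h2, h4]⟩
    | tmul a f =>
      refine ⟨_, hφ m a f, ?_⟩
      rw [hφ, Ideal.Quotient.eq, ← mul_sub, ← map_sub]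
      exact Ideal.mul_mem_left _ _ (algebraMap_mem_pow hQ n
        (MvPowerSeries.truncTotal_sub_truncTotal_mem_pow_idealOfVars le_rfl hnm f))
  obtain ⟨t, h1, h2⟩ := key
  rw [h2]
  rw [h1, Ideal.Quotient.eq] at hs
  exact (Ideal.Quotient.eq).2 (Ideal.pow_le_pow_right hnm hs)

variable [IsScalarTower (MvPolynomial σ ℂ) A S]

/-- The extended derivation `T` on `A ⊗ ℂ⟦x⟧` corresponds under evaluation to `Θ / Δ` on `S`, with
the loss of one order of precision. -/
lemma eval_derivation [Algebra ℂ A] [Algebra ℂ S] [IsScalarTower ℂ (MvPolynomial σ ℂ) A]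
    (hQ : ∀ i, algebraMap (MvPolynomial σ ℂ) S (MvPolynomial.X i) ∈ Q)
    (hφ : ∀ n a f, φ n (a ⊗ₜ f) = Ideal.Quotient.mk (Q ^ n)
        (algebraMap A S a * algebraMap (MvPolynomial σ ℂ) S (f.truncTotal n)))
    {θ : Derivation ℂ A A} {Δ : S} {Θ : Derivation ℂ S S}
    (hΘ : ∀ a, Θ (algebraMap A S a) = Δ * algebraMap A S (θ a))
    {T : A ⊗[MvPolynomial σ ℂ] MvPowerSeries σ ℂ →+ A ⊗[MvPolynomial σ ℂ] MvPowerSeries σ ℂ}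
    (hT : ∀ a f, T (a ⊗ₜ f) = θ a ⊗ₜ f +
      ∑ i, (a * θ (algebraMap (MvPolynomial σ ℂ) A (MvPolynomial.X i))) ⊗ₜ
      MvPowerSeries.pderiv ℂ i f) (n : ℕ) (x : A ⊗[MvPolynomial σ ℂ] MvPowerSeries σ ℂ) :
    ∃ s, φ (n + 1) x = Ideal.Quotient.mk _ s ∧
      Ideal.Quotient.mk _ Δ * φ n (T x) = Ideal.Quotient.mk _ (Θ s) := by
  induction x using TensorProduct.induction_on with
  | zero => exact ⟨0, by simp, by simp⟩
  | add x y hx hy =>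
    obtain ⟨s, h1, h2⟩ := hx
    obtain ⟨t, h3, h4⟩ := hy
    exact ⟨s + t, by simp [h1, h3], by simp [h2, h4, mul_add]⟩
  | tmul a f =>
    refine ⟨_, hφ _ a f, ?_⟩
    have h1 : φ n (θ a ⊗ₜ f) = Ideal.Quotient.mk (Q ^ n)
        (algebraMap A S (θ a) * algebraMap (MvPolynomial σ ℂ) S (f.truncTotal (n + 1))) :=
      eval_transition hQ hφ (Nat.le_succ n) _ (hφ _ _ _)
    rw [hT, map_add, h1, map_sum]
    simp only [hφ, ← truncTotal_succ_pderiv]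
    rw [← map_sum, ← map_add, ← map_mul, Θ.leibniz,
      IsScalarTower.algebraMap_apply (MvPolynomial σ ℂ) A S (f.truncTotal (n + 1)), hΘ, hΘ, derivation_chain_rule θ (f.truncTotal (n + 1))]
    congr 1
    simp only [smul_eq_mul, map_sum, map_mul, Finset.mul_sum, mul_add,
      ← IsScalarTower.algebraMap_apply (MvPolynomial σ ℂ) A S]
    rw [add_comm]
    congr 1
    · refine Finset.sum_congr rfl fun i _ => ?_
      ring
    · ring

/-- The common kernel of the evaluations is stable under the extended derivations. -/
lemma eval_derivation_eq_zero [IsDomain A] [IsDomain S] [Algebra ℂ A] [Algebra ℂ S]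
    [IsScalarTower ℂ (MvPolynomial σ ℂ) A] [IsScalarTower ℂ A S] [Algebra.FiniteType ℂ S]
    (hinj : Function.Injective (algebraMap A S))
    (hQ : ∀ i, algebraMap (MvPolynomial σ ℂ) S (MvPolynomial.X i) ∈ Q)
    (hφ : ∀ n a f, φ n (a ⊗ₜ f) = Ideal.Quotient.mk (Q ^ n)
        (algebraMap A S a * algebraMap (MvPolynomial σ ℂ) S (f.truncTotal n)))
    {θ : Derivation ℂ A A}
    {T : A ⊗[MvPolynomial σ ℂ] MvPowerSeries σ ℂ →+ A ⊗[MvPolynomial σ ℂ] MvPowerSeries σ ℂ}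
    (hT : ∀ a f, T (a ⊗ₜ f) = θ a ⊗ₜ f +
      ∑ i, (a * θ (algebraMap (MvPolynomial σ ℂ) A (MvPolynomial.X i))) ⊗ₜ
      MvPowerSeries.pderiv ℂ i f) (x : A ⊗[MvPolynomial σ ℂ] MvPowerSeries σ ℂ)
    (hx : ∀ n, φ n x = 0) (n : ℕ) : φ n (T x) = 0 := by
  have : IsNoetherianRing S := Algebra.FiniteType.isNoetherianRing ℂ S
  obtain ⟨Δ, hΔ, Θ, hΘ⟩ := exists_derivation_lift hinj θ
  obtain ⟨c, hc⟩ := mem_pow_of_mul_mem_pow Q hΔ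
  obtain ⟨s, h1, h2⟩ := eval_derivation hQ hφ hΘ hT (n + c) x
  rw [hx, eq_comm, Ideal.Quotient.eq_zero_iff_mem] at h1
  rw [Ideal.Quotient.eq_zero_iff_mem.2 (derivation_mem_pow Θ Q _ s h1)] at h2
  obtain ⟨r, hr⟩ := Ideal.Quotient.mk_surjective (φ (n + c) (T x))
  rw [← hr, ← map_mul, Ideal.Quotient.eq_zero_iff_mem] at h2
  rw [eval_transition hQ hφ (Nat.le_add_right n c) _ hr.symm, Ideal.Quotient.eq_zero_iff_mem]
  exact hc n r h2

end Completion

end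

/-! ### Splitting off a branch of the completion -/

section

open TensorProduct

/-- An ideal `κ` of `A ⊗[P] H` is generically a direct factor: over the fraction field `M` of `H`,
the algebra `M ⊗[P] Frac A` is finite and unramified, hence semisimple, so `κ` is generated there
by an idempotent. Clearing denominators puts a nonzero `c : H` in `κ + Ann κ`. -/
lemma exists_mem_sup_annihilator {P A H : Type*} [CommRing P] [IsDomain P] [CharZero P]
    [CommRing A] [IsDomain A] [CommRing H] [IsDomain H] [Algebra P A] [Algebra P H]
    [Module.Finite P A] [Module.Flat P H] (hA : Function.Injective (algebraMap P A))
    (hH : Function.Injective (algebraMap P H)) (κ : Ideal (A ⊗[P] H)) :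
    ∃ c : H, c ≠ 0 ∧ ∃ y ∈ κ, ∀ x ∈ κ, (1 ⊗ₜ c - y) * x = 0 := by
  have : FaithfulSMul P A := (faithfulSMul_iff_algebraMap_injective P A).2 hA
  let k := FractionRing P
  let L := FractionRing A
  let M := FractionRing H
  have hL := IsFractionRing.injective A L
  have hM := IsFractionRing.injective H M
  have hPL : Function.Injective (algebraMap P L) := by
    rw [IsScalarTower.algebraMap_eq P A L]; exact hL.comp hA
  have : FaithfulSMul P L := (faithfulSMul_iff_algebraMap_injective P L).2 hPL
  let : Algebra k L := FractionRing.liftAlgebra P L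
  have : IsScalarTower P k L := FractionRing.isScalarTower_liftAlgebra P L
  have : CharZero k := charZero_of_injective_algebraMap (IsFractionRing.injective P k)
  have : Algebra.IsAlgebraic P A := inferInstance
  have : Algebra.IsAlgebraic P L :=
    have := IsLocalization.isAlgebraic L (nonZeroDivisors A)
    .trans P A L
  have : Algebra.IsAlgebraic k L := (IsFractionRing.comap_isAlgebraic_iff (A := P)).1 inferInstance
  have : Algebra.FormallyUnramified k L := .of_isSeparable k L
  have : Algebra.FormallyUnramified P k := .of_isLocalization (nonZeroDivisors P)
  have : Algebra.FormallyUnramified P L := .comp P k L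
  have : Algebra.EssFiniteType A L := .of_isLocalization L (nonZeroDivisors A)
  have : Algebra.EssFiniteType P L := .comp P A L
  have : Module.Flat P k := IsLocalization.flat k (nonZeroDivisors P)
  have : Module.Flat P L := .trans P k L
  have hfin := Algebra.FormallyUnramified.finite_of_free M (M ⊗[P] L)
  have hred := Algebra.FormallyUnramified.isReduced_of_field M (M ⊗[P] L)
  have hart : IsArtinianRing (M ⊗[P] L) := isArtinian_of_tower M inferInstance
  have hss := IsArtinianRing.isSemisimpleRing_of_isReduced (M ⊗[P] L)
  let j : A ⊗[P] H →ₐ[P] M ⊗[P] L := ((Algebra.TensorProduct.comm P L M).toAlgHom).comp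
    (Algebra.TensorProduct.map (IsScalarTower.toAlgHom P A L) (IsScalarTower.toAlgHom P H M))
  have hj : ∀ a h, j (a ⊗ₜ h) = algebraMap H M h ⊗ₜ algebraMap A L a := fun a h => rfl
  have hjinj : Function.Injective j := by
    refine (Algebra.TensorProduct.comm P L M).injective.comp ?_
    have h1 : Function.Injective (LinearMap.rTensor H (IsScalarTower.toAlgHom P A L).toLinearMap) :=
      Module.Flat.rTensor_preserves_injective_linearMap _ hL
    have h2 : Function.Injective (LinearMap.lTensor L (IsScalarTower.toAlgHom P H M).toLinearMap) :=
      Module.Flat.lTensor_preserves_injective_linearMap _ hM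
    have h3 := h2.comp h1
    rw [← LinearMap.coe_comp, LinearMap.lTensor_comp_rTensor] at h3
    exact h3
  have hden : ∀ l : M ⊗[P] L, ∃ c : H, c ≠ 0 ∧ ∃ z, j (1 ⊗ₜ c) * l = j z := by
    intro l
    induction l using TensorProduct.induction_on with
    | zero => exact ⟨1, one_ne_zero, 0, by simp⟩
    | add x y hx hy =>
      obtain ⟨c, hc, z, e⟩ := hx
      obtain ⟨c', hc', z', e'⟩ := hy
      refine ⟨c * c', mul_ne_zero hc hc', (1 ⊗ₜ c') * z + (1 ⊗ₜ c) * z', ?_⟩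
      have : (1 : A) ⊗ₜ[P] (c * c') = (1 ⊗ₜ c) * (1 ⊗ₜ c') := by
        simp
      rw [this, map_mul, map_add, map_mul, map_mul, ← e, ← e']
      ring
    | tmul m l =>
      obtain ⟨⟨h, h'⟩, e⟩ := IsLocalization.surj (nonZeroDivisors H) m
      obtain ⟨⟨a, r⟩, e'⟩ := IsLocalizedModule.surj (nonZeroDivisors P)
        (IsScalarTower.toAlgHom P A L).toLinearMap l
      refine ⟨h' * algebraMap P H r, mul_ne_zero (nonZeroDivisors.ne_zero h'.2) ?_,
        a ⊗ₜ h, ?_⟩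
      · rw [Ne, map_eq_zero_iff _ hH]
        exact nonZeroDivisors.ne_zero r.2
      · rw [hj, hj]
        have e2 : algebraMap A L a = (r : P) • l := e'.symm
        rw [e2, ← smul_tmul, Algebra.TensorProduct.tmul_mul_tmul, map_one, one_mul, ← e,
          Algebra.smul_def, IsScalarTower.algebraMap_apply P H M, map_mul]
        congr 1
        simp only
        ring
  obtain ⟨I', hI'⟩ := exists_isCompl (κ.map j)
  obtain ⟨ε, hε, ε', hε', e1⟩ := Submodule.mem_sup.1 (hI'.sup_eq_top ▸ Submodule.mem_top :
    (1 : M ⊗[P] L) ∈ κ.map j ⊔ I')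
  have hclear : ∃ c : H, c ≠ 0 ∧ ∃ y ∈ κ, j (1 ⊗ₜ c) * ε = j y := by
    clear e1
    refine Submodule.span_induction (p := fun ε _ => ∃ c : H, c ≠ 0 ∧ ∃ y ∈ κ,
      j (1 ⊗ₜ c) * ε = j y) ?_ ?_ ?_ ?_ hε
    · rintro _ ⟨y, hy, rfl⟩
      exact ⟨1, one_ne_zero, y, hy, by rw [← Algebra.TensorProduct.one_def, map_one, one_mul]⟩
    · exact ⟨1, one_ne_zero, 0, κ.zero_mem, by simp⟩
    · rintro x y _ _ ⟨c, hc, z, hz, e⟩ ⟨c', hc', z', hz', e'⟩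
      refine ⟨c * c', mul_ne_zero hc hc', (1 ⊗ₜ c') * z + (1 ⊗ₜ c) * z',
        κ.add_mem (κ.mul_mem_left _ hz) (κ.mul_mem_left _ hz'), ?_⟩
      have : (1 : A) ⊗ₜ[P] (c * c') = (1 ⊗ₜ c) * (1 ⊗ₜ c') := by
        simp
      rw [this, map_mul, map_add, map_mul, map_mul, ← e, ← e']
      ring
    · rintro l x _ ⟨c, hc, z, hz, e⟩
      obtain ⟨c', hc', z', e'⟩ := hden l
      refine ⟨c * c', mul_ne_zero hc hc', z' * z, κ.mul_mem_left _ hz, ?_⟩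
      have : (1 : A) ⊗ₜ[P] (c * c') = (1 ⊗ₜ c) * (1 ⊗ₜ c') := by
        simp
      rw [this, map_mul, map_mul, ← e, ← e', smul_eq_mul]
      ring
  obtain ⟨c, hc, y, hy, e⟩ := hclear
  refine ⟨c, hc, y, hy, fun x hx => hjinj ?_⟩
  rw [map_mul, map_sub, ← e, map_zero]
  have h0 : ε' * j x = 0 := by
    have : ε' * j x ∈ κ.map j ⊓ I' :=
      ⟨Ideal.mul_mem_left _ _ (Ideal.mem_map_of_mem _ hx), I'.mul_mem_right _ hε'⟩
    rwa [hI'.inf_eq_bot] at this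
  have : j (1 ⊗ₜ c) - j (1 ⊗ₜ c) * ε = j (1 ⊗ₜ c) * ε' := by
    linear_combination (-j (1 ⊗ₜ c)) * e1
  rw [this, mul_assoc, h0, mul_zero]

/-- The equational criterion of flatness for one relation in two unknowns: `(sM : r) = (s : r) M`. -/
lemma Module.Flat.exists_dvd_of_smul_eq {A M : Type*} [CommRing A] [AddCommGroup M] [Module A M]
    [Module.Flat A M] {r s : A} {x y : M} (h : r • x = s • y) :
    ∃ (k : ℕ) (a : Fin k → A) (z : Fin k → M), x = ∑ j, a j • z j ∧ ∀ j, s ∣ r * a j := by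
  have h0 : ∑ i, (![r, -s] : Fin 2 → A) i • (![x, y] : Fin 2 → M) i = 0 := by
    simp [Fin.sum_univ_two, h]
  obtain ⟨k, a, z, h1, h2⟩ := Module.Flat.iff_forall_isTrivialRelation.1 ‹_› h0
  refine ⟨k, a 0, z, by simpa using h1 0, fun j => ⟨a 1 j, ?_⟩⟩
  have := h2 j
  simp only [Fin.sum_univ_two, Matrix.cons_val_zero, Matrix.cons_val_one] at this
  linear_combination this

lemma Module.Flat.smul_right_cancel {A M : Type*} [CommRing A] [IsDomain A] [AddCommGroup M]
    [Module A M] [Module.Flat A M] {r : A} (hr : r ≠ 0) {x y : M} (h : r • x = r • y) :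
    x = y := by
  obtain ⟨k, a, z, h1, h2⟩ := Module.Flat.exists_dvd_of_smul_eq
    (show r • (x - y) = (0 : A) • (0 : M) by rw [smul_sub, h]; simp)
  rw [← sub_eq_zero, h1]
  refine Finset.sum_eq_zero fun j _ => ?_
  rw [(mul_eq_zero.1 (zero_dvd_iff.1 (h2 j))).resolve_left hr, zero_smul]

/-- If `κ + Ann κ` contracts to a nonzero ideal of `A` contained in no height-one prime, then `κ` is
cut out generically by an idempotent `e` of `H`. Indeed a nonzero `δ` in the contraction is `k + u`
with `k ∈ κ` and `u ∈ Ann κ`, and `e = u / δ` lies in `H` by flatness and condition `S₂`. -/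
lemma exists_idempotent_of_sup_annihilator {A H : Type*} [CommRing A] [IsDomain A]
    [IsNoetherianRing A] [IsIntegrallyClosed A] [CommRing H] [Algebra A H] [Module.Flat A H]
    (κ : Ideal H) (h0 : (κ ⊔ κ.annihilator).comap (algebraMap A H) ≠ ⊥)
    (hc : ∀ p : Ideal A, p.IsPrime → p.height = 1 →
      ¬ (κ ⊔ κ.annihilator).comap (algebraMap A H) ≤ p) :
    ∃ e : H, e * e = e ∧ (∀ x ∈ κ, e * x = 0) ∧ ∃ δ : A, δ ≠ 0 ∧ algebraMap A H δ * (1 - e) ∈ κ := by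
  obtain ⟨δ, hδ, hδ0⟩ := Submodule.exists_mem_ne_zero_of_ne_bot h0
  obtain ⟨c, hcm, hreg⟩ := exists_regular_of_forall_height_one _ hc hδ0
  obtain ⟨k, hk, u, hu, e1⟩ := Submodule.mem_sup.1 (Ideal.mem_comap.1 hδ)
  obtain ⟨k', hk', u', hu', e2⟩ := Submodule.mem_sup.1 (Ideal.mem_comap.1 hcm)
  rw [Submodule.mem_annihilator] at hu hu'
  simp only [smul_eq_mul] at hu hu'
  have e3 : c • u = δ • u' := by
    rw [Algebra.smul_def, Algebra.smul_def, ← e1, ← e2]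
    linear_combination hu k' hk' - hu' k hk
  obtain ⟨n, a, z, h1, h2⟩ := Module.Flat.exists_dvd_of_smul_eq (A := A) (M := H) e3
  choose b hb using fun j => hreg _ (h2 j)
  obtain ⟨e, he⟩ : ∃ e : H, u = δ • e := ⟨∑ j, b j • z j, by
    rw [h1, Finset.smul_sum]
    exact Finset.sum_congr rfl fun j _ => by rw [hb, mul_smul]⟩
  have hδe : algebraMap A H δ * (1 - e) = k := by
    rw [Algebra.smul_def] at he
    linear_combination he - e1
  have heκ : ∀ x ∈ κ, e * x = 0 := fun x hx => Module.Flat.smul_right_cancel hδ0 (by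
    rw [smul_zero, ← hu x hx, he, smul_mul_assoc])
  refine ⟨e, ?_, heκ, δ, hδ0, hδe ▸ hk⟩
  refine Module.Flat.smul_right_cancel hδ0 ?_
  have := heκ k hk
  rw [← hδe] at this
  rw [Algebra.smul_def, Algebra.smul_def]
  linear_combination -this

lemma map_mem_sup_annihilator {H : Type*} [CommRing H] (T : H →+ H)
    (hT : ∀ x y, T (x * y) = x * T y + y * T x) (κ : Ideal H) (hκ : ∀ x ∈ κ, T x ∈ κ) :
    ∀ x ∈ κ ⊔ κ.annihilator, T x ∈ κ ⊔ κ.annihilator := by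
  intro x hx
  obtain ⟨k, hk, u, hu, rfl⟩ := Submodule.mem_sup.1 hx
  rw [map_add]
  refine add_mem (Submodule.mem_sup_left (hκ k hk)) (Submodule.mem_sup_right ?_)
  rw [Submodule.mem_annihilator] at hu ⊢
  simp only [smul_eq_mul] at hu ⊢
  intro y hy
  have := hT u y
  rw [hu y hy, map_zero, hu _ (hκ y hy)] at this
  linear_combination -this

/-- An ideal of `A ⊗ ℂ⟦x⟧` that is stable under derivations and contains a nonzero power series
contains a nonzero element of `A`: differentiate until the series becomes a unit. -/
lemma exists_ne_zero_mem_of_series_mem {σ A : Type*} [Fintype σ] [CommRing A] [IsDomain A]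
    [Algebra ℂ A] [Algebra (MvPolynomial σ ℂ) A] [IsScalarTower ℂ (MvPolynomial σ ℂ) A]
    [Algebra.FiniteType ℂ A] (hinj : Function.Injective (algebraMap (MvPolynomial σ ℂ) A))
    (J : Ideal (A ⊗[MvPolynomial σ ℂ] MvPowerSeries σ ℂ))
    (hJ : ∀ θ : Derivation ℂ A A, ∃ T : A ⊗[MvPolynomial σ ℂ] MvPowerSeries σ ℂ →+
        A ⊗[MvPolynomial σ ℂ] MvPowerSeries σ ℂ,
      (∀ a f, T (a ⊗ₜ f) = θ a ⊗ₜ f +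
        ∑ i, (a * θ (algebraMap (MvPolynomial σ ℂ) A (MvPolynomial.X i))) ⊗ₜ
          MvPowerSeries.pderiv ℂ i f) ∧ ∀ x ∈ J, T x ∈ J)
    {c : MvPowerSeries σ ℂ} (hc : c ≠ 0) (hcJ : 1 ⊗ₜ c ∈ J) :
    ∃ δ : A, δ ≠ 0 ∧ δ ⊗ₜ 1 ∈ J := by
  classical
  have key : ∀ (d : ℕ) (f : MvPowerSeries σ ℂ) (α : σ →₀ ℕ) (δ : A), α.degree = d →
      MvPowerSeries.coeff α f ≠ 0 → δ ≠ 0 → δ ⊗ₜ f ∈ J → ∃ δ : A, δ ≠ 0 ∧ δ ⊗ₜ 1 ∈ J := by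
    intro d
    induction d with
    | zero =>
      intro f α δ hα hf hδ hmem
      rw [Finsupp.degree_eq_zero_iff] at hα
      subst hα
      refine ⟨δ, hδ, ?_⟩
      have hU : f * f⁻¹ = 1 := MvPowerSeries.mul_inv_cancel f (by simpa using hf)
      have := J.mul_mem_right (1 ⊗ₜ f⁻¹) hmem
      rwa [Algebra.TensorProduct.tmul_mul_tmul, hU, mul_one] at this
    | succ d ih =>
      intro f α δ hα hf hδ hmem
      obtain ⟨i, hi⟩ : ∃ i, α i ≠ 0 := by
        by_contra! h
        have : α = 0 := by ext i; simpa using h i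
        rw [this] at hα
        simp at hα
      obtain ⟨g, hg, θ, hθ⟩ := exists_partial hinj i
      obtain ⟨T, hT, hTJ⟩ := hJ θ
      obtain ⟨β, rfl⟩ : ∃ β, α = β + Finsupp.single i 1 :=
        ⟨α - Finsupp.single i 1, (tsub_add_cancel_of_le (by
          rw [Finsupp.single_le_iff]; omega)).symm⟩
      have hβ : β.degree = d := by
        rw [map_add, Finsupp.degree_single] at hα; omega
      refine ih (MvPowerSeries.pderiv ℂ i f) β (δ * δ * g) hβ ?_
        (mul_ne_zero (mul_ne_zero hδ hδ) hg) ?_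
      · rw [MvPowerSeries.coeff_pderiv]
        exact mul_ne_zero hf (Nat.cast_add_one_ne_zero _)
      · have h1 := hTJ _ hmem
        rw [hT, Finset.sum_eq_single i] at h1
        · rw [hθ, MvPolynomial.pderiv_X_self, map_one, mul_one] at h1
          have h2 := J.sub_mem (J.mul_mem_left (δ ⊗ₜ 1) h1) (J.mul_mem_left (θ δ ⊗ₜ 1) hmem)
          simp only [mul_add, Algebra.TensorProduct.tmul_mul_tmul, one_mul] at h2
          rwa [mul_comm (θ δ), add_sub_cancel_left, ← mul_assoc] at h2
        · intro j _ hji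
          rw [hθ, MvPolynomial.pderiv_X_of_ne hji, map_zero, mul_zero, mul_zero, zero_tmul]
        · simp
  obtain ⟨α, hα⟩ : ∃ α, MvPowerSeries.coeff α c ≠ 0 := by
    by_contra! h
    exact hc (MvPowerSeries.ext (by simpa using h))
  exact key _ c α 1 rfl hα one_ne_zero hcJ

end

/-! ### Completeness -/

section

open TensorProduct

lemma finite_quotient_pow_idealOfVars (σ : Type*) [Finite σ] (j : ℕ) :
    Module.Finite ℂ (MvPolynomial σ ℂ ⧸ MvPolynomial.idealOfVars σ ℂ ^ j) := by
  let I := MvPolynomial.idealOfVars σ ℂ ^ j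
  have hfin : Finite {x : σ →₀ ℕ // x.degree < j} :=
    (Finsupp.finite_of_degree_lt (σ := σ) j).to_subtype
  let f : MvPolynomial σ ℂ →ₗ[ℂ] ({x : σ →₀ ℕ // x.degree < j} → ℂ) :=
    LinearMap.pi fun x => MvPolynomial.lcoeff ℂ x.1
  have hf : ∀ p, f p = 0 ↔ p ∈ I := by
    intro p
    rw [MvPolynomial.mem_pow_idealOfVars_iff']
    simp [f, funext_iff]
  let g : (MvPolynomial σ ℂ ⧸ I) →ₗ[ℂ] ({x : σ →₀ ℕ // x.degree < j} → ℂ) :=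
    (I.restrictScalars ℂ).liftQ f (fun p hp => (hf p).2 hp)
  refine Module.Finite.of_injective g ?_
  rw [injective_iff_map_eq_zero]
  intro x hx
  obtain ⟨p, rfl⟩ := Ideal.Quotient.mk_surjective x
  exact Ideal.Quotient.eq_zero_iff_mem.2 ((hf p).1 hx)

/-- A descending chain of submodules of `A` stabilizes modulo each power of the ideal of the origin. -/
lemma exists_stabilization {σ A : Type*} [Finite σ] [CommRing A] [Algebra (MvPolynomial σ ℂ) A]
    [Module.Finite (MvPolynomial σ ℂ) A] (L : ℕ → Submodule (MvPolynomial σ ℂ) A)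
    (hL : Antitone L) (j : ℕ) :
    ∃ N, ∀ n, N ≤ n →
      L N ≤ L n ⊔ (MvPolynomial.idealOfVars σ ℂ ^ j • ⊤ : Submodule (MvPolynomial σ ℂ) A) := by
  let P := MvPolynomial σ ℂ
  let I : Ideal P := MvPolynomial.idealOfVars σ ℂ ^ j
  have h1 : Module.Finite ℂ (P ⧸ I) := finite_quotient_pow_idealOfVars σ j
  have h2 : IsArtinianRing (P ⧸ I) := isArtinian_of_tower ℂ inferInstance
  let M := A ⧸ (I • ⊤ : Submodule P A)
  have h3 : Module.Finite (P ⧸ I) M := Module.Finite.of_restrictScalars_finite P (P ⧸ I) M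
  have h4 : IsArtinian (P ⧸ I) M := inferInstance
  have h5 : IsArtinian P M :=
    isArtinian_of_surjective_algebraMap (R := P ⧸ I) Ideal.Quotient.mk_surjective
  let q := Submodule.mkQ (I • ⊤ : Submodule P A)
  obtain ⟨N, hN⟩ := IsArtinian.monotone_stabilizes (R := P) (M := M)
    ⟨fun n => OrderDual.toDual ((L n).map q), fun a b hab => Submodule.map_mono (hL hab)⟩
  refine ⟨N, fun n hn x hx => ?_⟩
  have h6 : (L N).map q = (L n).map q := hN n hn
  have h7 : q x ∈ (L n).map q := h6 ▸ Submodule.mem_map_of_mem hx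
  obtain ⟨y, hy, hyx⟩ := h7
  rw [Submodule.mem_sup]
  exact ⟨y, hy, x - y, (Submodule.Quotient.eq _).1 hyx.symm, by abel⟩

/-- Convergence of `∑ p j` in the ring of power series. -/
lemma exists_series_of_mem_pow {σ : Type*} [Finite σ] (p : ℕ → MvPolynomial σ ℂ)
    (hp : ∀ j, p j ∈ MvPolynomial.idealOfVars σ ℂ ^ j) :
    ∃ f : MvPowerSeries σ ℂ, ∀ n,
      f.truncTotal n - ∑ j ∈ Finset.range n, p j ∈ MvPolynomial.idealOfVars σ ℂ ^ n := by
  let f : MvPowerSeries σ ℂ := fun x => ∑ j ∈ Finset.range (x.degree + 1), (p j).coeff x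
  refine ⟨f, fun n => ?_⟩
  rw [MvPolynomial.mem_pow_idealOfVars_iff']
  intro x hx
  have h1 : (f.truncTotal n).coeff x = ∑ j ∈ Finset.range (x.degree + 1), (p j).coeff x :=
    MvPowerSeries.coeff_truncTotal _ hx
  rw [MvPolynomial.coeff_sub, h1, MvPolynomial.coeff_sum, sub_eq_zero]
  refine Finset.sum_subset (Finset.range_subset_range.2 hx) fun j _ hj => ?_
  refine (MvPolynomial.mem_pow_idealOfVars_iff' j _).1 (hp j) x ?_
  rw [Finset.mem_range] at hj
  lia

/-- If `b` is approximated by `A` to every order at `Q`, then it is the value of a single element of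
`A ⊗ ℂ⟦x⟧`. The approximations are made coherent by a Mittag-Leffler argument. -/
lemma exists_completion_of_approx {σ A S : Type*} [Finite σ] [CommRing A] [CommRing S]
    [Algebra (MvPolynomial σ ℂ) A] [Algebra (MvPolynomial σ ℂ) S] [Algebra A S]
    [IsScalarTower (MvPolynomial σ ℂ) A S] [Module.Finite (MvPolynomial σ ℂ) A] {Q : Ideal S}
    {φ : ∀ n : ℕ, A ⊗[MvPolynomial σ ℂ] MvPowerSeries σ ℂ →ₐ[A] S ⧸ Q ^ n}
    (hQ : ∀ i, algebraMap (MvPolynomial σ ℂ) S (MvPolynomial.X i) ∈ Q)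
    (hφ : ∀ n a f, φ n (a ⊗ₜ f) = Ideal.Quotient.mk (Q ^ n)
        (algebraMap A S a * algebraMap (MvPolynomial σ ℂ) S (f.truncTotal n)))
    (b : S) (happ : ∀ n, ∃ x : A, b - algebraMap A S x ∈ Q ^ n) :
    ∃ β, ∀ n, φ n β = Ideal.Quotient.mk (Q ^ n) b := by
  let P := MvPolynomial σ ℂ
  let m : Ideal P := MvPolynomial.idealOfVars σ ℂ
  let L : ℕ → Submodule P A := fun n => ((Q ^ n).comap (algebraMap A S)).restrictScalars P
  have hL : Antitone L := fun a b hab x hx => Ideal.pow_le_pow_right hab hx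
  -- `C j α` says that `α` is, modulo `m ^ j`, an approximation of `b` of every order
  let C : ℕ → A → Prop := fun j α => ∀ n, ∃ x : A, b - algebraMap A S x ∈ Q ^ n ∧
    x - α ∈ (m ^ j • ⊤ : Submodule P A)
  have step : ∀ j α, C j α → ∃ α', C (j + 1) α' ∧ α' - α ∈ (m ^ j • ⊤ : Submodule P A) := by
    intro j α hα
    obtain ⟨N, hN⟩ := exists_stabilization L hL (j + 1)
    obtain ⟨α', h1, h2⟩ := hα N
    refine ⟨α', fun n => ?_, h2⟩
    obtain ⟨y, hy⟩ := happ (max n N)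
    have hy' : b - algebraMap A S y ∈ Q ^ N := Ideal.pow_le_pow_right (le_max_right n N) hy
    have h3 : y - α' ∈ L N := by
      change algebraMap A S (y - α') ∈ Q ^ N
      rw [map_sub]
      convert sub_mem h1 hy' using 1
      ring
    obtain ⟨l, hl, t, ht, hlt⟩ := Submodule.mem_sup.1 (hN _ (le_max_right n N) h3)
    have hl' : algebraMap A S l ∈ Q ^ n := Ideal.pow_le_pow_right (le_max_left n N) hl
    have hy'' : b - algebraMap A S y ∈ Q ^ n := Ideal.pow_le_pow_right (le_max_left n N) hy
    refine ⟨y - l, ?_, ?_⟩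
    · convert add_mem hy'' hl' using 1
      rw [map_sub]
      ring
    · convert ht using 1
      linear_combination - hlt
  have h0 : C 0 0 := fun n => by
    obtain ⟨x, hx⟩ := happ n
    exact ⟨x, hx, by rw [pow_zero, Ideal.one_eq_top, Submodule.top_smul]; trivial⟩
  choose! g hg1 hg2 using step
  let α : ℕ → A := fun n => Nat.rec 0 (fun j a => g j a) n
  have hα : ∀ j, C j (α j) := fun j => by
    induction j with
    | zero => exact h0
    | succ j ih => exact hg1 j _ ih
  obtain ⟨k, e, he⟩ := Module.Finite.exists_fin (R := P) (M := A)
  have hdiff : ∀ j, ∃ p : Fin k → P, (∀ i, p i ∈ m ^ j) ∧ α (j + 1) - α j = ∑ i, p i • e i := by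
    intro j
    have h1 : α (j + 1) - α j ∈ (m ^ j • ⊤ : Submodule P A) := hg2 j _ (hα j)
    rw [← he, Submodule.mem_ideal_smul_span_iff_exists_sum] at h1
    obtain ⟨a, ha, hsum⟩ := h1
    exact ⟨a, ha, by rw [← hsum, Finsupp.sum_fintype _ _ (by simp)]⟩
  choose p hp1 hp2 using hdiff
  choose f hf using fun i => exists_series_of_mem_pow (fun j => p j i) (fun j => hp1 j i)
  have hαn : ∀ n, α n = ∑ i, (∑ j ∈ Finset.range n, p j i) • e i := by
    intro n
    induction n with
    | zero => simp [α]
    | succ n ih =>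
      simp only [Finset.sum_range_succ, add_smul, Finset.sum_add_distrib]
      rw [← ih, ← hp2, add_sub_cancel]
  have hsmul : ∀ n, ∀ x ∈ (m ^ n • ⊤ : Submodule P A), algebraMap A S x ∈ Q ^ n := by
    intro n x hx
    have : (m ^ n • ⊤ : Submodule P A) ≤ L n := by
      rw [Submodule.smul_le]
      intro r hr a _
      change algebraMap A S (r • a) ∈ Q ^ n
      rw [Algebra.smul_def, map_mul, ← IsScalarTower.algebraMap_apply]
      exact Ideal.mul_mem_right _ _ (algebraMap_mem_pow hQ n hr)
    exact this hx
  refine ⟨∑ i, e i ⊗ₜ f i, fun n => ?_⟩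
  obtain ⟨x, hx1, hx2⟩ := hα n n
  simp only [map_sum, hφ]
  rw [← map_sum, Ideal.Quotient.eq]
  have h1 : ∑ i, algebraMap A S (e i) * algebraMap P S ((f i).truncTotal n)
      - algebraMap A S (α n) ∈ Q ^ n := by
    rw [hαn, map_sum, ← Finset.sum_sub_distrib]
    refine sum_mem fun i _ => ?_
    convert Ideal.mul_mem_left _ (algebraMap A S (e i)) (algebraMap_mem_pow hQ n (hf i n)) using 1
    rw [Algebra.smul_def, map_mul (algebraMap A S), ← IsScalarTower.algebraMap_apply, map_sub]
    ring
  have h2 := hsmul n _ hx2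
  rw [map_sub] at h2
  convert sub_mem (sub_mem h1 h2) hx1 using 1
  ring

end

/-! ### Regularity at the image of a closed point -/

section

open TensorProduct

/-- Noether normalization of `A` with coordinates vanishing at the image of the point `Q`. -/
lemma exists_centered_normalization {A S : Type*} [CommRing A] [IsDomain A] [CommRing S]
    [Algebra ℂ A] [Algebra ℂ S] [Algebra.FiniteType ℂ A] [Algebra.FiniteType ℂ S]
    (ψ : A →ₐ[ℂ] S) (Q : Ideal S) [Q.IsMaximal] :
    ∃ (d : ℕ) (g : MvPolynomial (Fin d) ℂ →ₐ[ℂ] A), Function.Injective g ∧ g.Finite ∧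
      ∀ i, ψ (g (MvPolynomial.X i)) ∈ Q := by
  obtain ⟨d, g, hg, hfin⟩ := exists_finite_inj_algHom_of_fg ℂ A
  obtain ⟨χ, hχ⟩ := exists_character Q
  let c : Fin d → ℂ := fun i => χ (ψ (g (MvPolynomial.X i)))
  let t : MvPolynomial (Fin d) ℂ ≃ₐ[ℂ] MvPolynomial (Fin d) ℂ := AlgEquiv.ofAlgHom
    (MvPolynomial.aeval fun i => MvPolynomial.X i - MvPolynomial.C (c i))
    (MvPolynomial.aeval fun i => MvPolynomial.X i + MvPolynomial.C (c i))
    (by ext i : 1; simp [← MvPolynomial.algebraMap_eq])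
    (by ext i : 1; simp [← MvPolynomial.algebraMap_eq])
  refine ⟨d, g.comp t, hg.comp t.injective, ?_, fun i => ?_⟩
  · exact AlgHom.Finite.comp hfin (AlgHom.Finite.of_surjective _ t.surjective)
  · have : t (MvPolynomial.X i) = MvPolynomial.X i - algebraMap ℂ _ (c i) := by
      simp [t, MvPolynomial.algebraMap_eq]
    change ψ (g (t _)) ∈ Q
    rw [this, map_sub, map_sub, AlgHom.commutes, AlgHom.commutes]
    exact hχ _

lemma flat_mvPowerSeries (σ : Type*) [Finite σ] :
    Module.Flat (MvPolynomial σ ℂ) (MvPowerSeries σ ℂ) :=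
  Module.Flat.of_linearEquiv (MvPowerSeries.toAdicCompletionAlgEquiv σ ℂ).toLinearEquiv

lemma exists_dvd_of_algebraMap_mul_eq {A H : Type*} [CommRing A] [CommRing H] [Algebra A H]
    [Module.Flat A H] {r s : A} {x y : H} (h : algebraMap A H r * x = algebraMap A H s * y) :
    ∃ (k : ℕ) (a : Fin k → A) (z : Fin k → H),
      x = ∑ j, algebraMap A H (a j) * z j ∧ ∀ j, s ∣ r * a j := by
  simp only [← Algebra.smul_def] at h ⊢
  exact Module.Flat.exists_dvd_of_smul_eq (A := A) (M := H) h

/-- The branch of `Spec A` seen from the point `Q` of `Spec S` is cut out in the completion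
`A ⊗ ℂ⟦x⟧` by an idempotent `e`, in the sense that `e` annihilates the common kernel of the
evaluations, and `1 - e` lies in this kernel up to a nonzero factor from `A`. This replaces the
analytic irreducibility of normal varieties. -/
lemma exists_idempotent_completion {σ A S : Type*} [Fintype σ] [CommRing A] [IsDomain A]
    [CommRing S] [IsDomain S] [Algebra ℂ A] [Algebra ℂ S] [Algebra.FiniteType ℂ A]
    [Algebra.FiniteType ℂ S] [IsIntegrallyClosed A]
    [Algebra (MvPolynomial σ ℂ) A] [Algebra (MvPolynomial σ ℂ) S] [Algebra A S]
    [IsScalarTower (MvPolynomial σ ℂ) A S] [IsScalarTower ℂ (MvPolynomial σ ℂ) A]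
    [IsScalarTower ℂ A S] [Module.Finite (MvPolynomial σ ℂ) A] {Q : Ideal S}
    {φ : ∀ n : ℕ, A ⊗[MvPolynomial σ ℂ] MvPowerSeries σ ℂ →ₐ[A] S ⧸ Q ^ n}
    (hP : Function.Injective (algebraMap (MvPolynomial σ ℂ) A))
    (hinj : Function.Injective (algebraMap A S))
    (hQ : ∀ i, algebraMap (MvPolynomial σ ℂ) S (MvPolynomial.X i) ∈ Q)
    (hφ : ∀ n a f, φ n (a ⊗ₜ f) = Ideal.Quotient.mk (Q ^ n)
        (algebraMap A S a * algebraMap (MvPolynomial σ ℂ) S (f.truncTotal n))) :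
    ∃ e : A ⊗[MvPolynomial σ ℂ] MvPowerSeries σ ℂ, e * e = e ∧
      (∀ x, (∀ n, φ n x = 0) → e * x = 0) ∧
      ∃ δ : A, δ ≠ 0 ∧ ∀ n, φ n (algebraMap A _ δ * (1 - e)) = 0 := by
  let P := MvPolynomial σ ℂ
  let H := A ⊗[P] MvPowerSeries σ ℂ
  have : IsNoetherianRing A := Algebra.FiniteType.isNoetherianRing ℂ A
  have := flat_mvPowerSeries σ
  have : IsDomain (MvPowerSeries σ ℂ) := NoZeroDivisors.to_isDomain _
  let κ : Ideal H := ⨅ n, RingHom.ker (φ n)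
  have hκ : ∀ x, x ∈ κ ↔ ∀ n, φ n x = 0 := fun x => by simp [κ, Submodule.mem_iInf]
  have hT : ∀ θ : Derivation ℂ A A, ∃ T : H →+ H, (∀ a f, T (a ⊗ₜ f) = θ a ⊗ₜ f +
        ∑ i, (a * θ (algebraMap P A (MvPolynomial.X i))) ⊗ₜ MvPowerSeries.pderiv ℂ i f) ∧
      ∀ x ∈ κ ⊔ κ.annihilator, T x ∈ κ ⊔ κ.annihilator := by
    intro θ
    obtain ⟨T, h1, h2⟩ := exists_tensor_derivation (P := P) (H := MvPowerSeries σ ℂ) θ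
      (fun i => MvPolynomial.pderiv i) (fun i => MvPowerSeries.pderiv ℂ i)
      (fun i => θ (algebraMap P A (MvPolynomial.X i))) (derivation_chain_rule θ)
      (fun i p => MvPowerSeries.pderiv_coe p)
    refine ⟨T, h1, map_mem_sup_annihilator T h2 κ fun x hx => ?_⟩
    rw [hκ] at hx ⊢
    exact eval_derivation_eq_zero hinj hQ hφ h1 x hx
  obtain ⟨c, hc, y, hy, hcy⟩ := exists_mem_sup_annihilator (H := MvPowerSeries σ ℂ) hP
    (MvPolynomial.coe_injective σ ℂ) κ
  have hcJ : 1 ⊗ₜ c ∈ κ ⊔ κ.annihilator :=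
    Submodule.mem_sup.2 ⟨y, hy, 1 ⊗ₜ c - y, Submodule.mem_annihilator.2 hcy, by abel⟩
  obtain ⟨δ, hδ, hδJ⟩ := exists_ne_zero_mem_of_series_mem hP _ hT hc hcJ
  have h0 : (κ ⊔ κ.annihilator).comap (algebraMap A H) ≠ ⊥ := by
    intro h
    have : δ ∈ (κ ⊔ κ.annihilator).comap (algebraMap A H) := hδJ
    rw [h] at this
    exact hδ this
  obtain ⟨e, he, hek, δ', hδ', hmem⟩ := exists_idempotent_of_sup_annihilator κ h0
    (not_le_of_forall_derivation_mem _ h0 fun θ x hx => by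
      obtain ⟨T, h1, h2⟩ := hT θ
      have h3 := h2 _ (Ideal.mem_comap.1 hx)
      rw [Algebra.TensorProduct.algebraMap_apply, h1] at h3
      have h4 : θ x ⊗ₜ[P] (1 : MvPowerSeries σ ℂ) ∈ κ ⊔ κ.annihilator := by simpa using h3
      exact h4)
  exact ⟨e, he, fun x hx => hek x ((hκ x).2 hx), δ', hδ', (hκ _).1 hmem⟩

/-- If `b = a / h` is approximated by `A` to every order at `Q`, then `b` is regular on `Spec A` at the
image of `Q`: it has a denominator `s` that does not vanish there. With `u` the
idempotent of the branch and `β` an element of the completion with value `b`, the relation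
`a u = h (u β)` and flatness yield `h ∣ s a` for elements `s` of `A` that generate an ideal of
the completion containing `u`; as `u` does not vanish at the point, some `s` does not. -/
lemma unramified_step {A S : Type*} [CommRing A] [IsDomain A] [CommRing S] [IsDomain S]
    [Algebra ℂ A] [Algebra ℂ S] [Algebra.FiniteType ℂ A] [Algebra.FiniteType ℂ S]
    [IsIntegrallyClosed A] (ψ : A →ₐ[ℂ] S) (hψ : Function.Injective ψ) (Q : Ideal S) [Q.IsMaximal]
    (b : S) (h a : A) (e : ψ h * b = ψ a) (happ : ∀ n, ∃ x, b - ψ x ∈ Q ^ n) :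
    ∃ s, ψ s ∉ Q ∧ ∃ a', s * a = a' * h := by
  obtain ⟨d, g, hg, hgfin, hgQ⟩ := exists_centered_normalization ψ Q
  let P := MvPolynomial (Fin d) ℂ
  let : Algebra P A := g.toRingHom.toAlgebra
  let : Algebra A S := ψ.toRingHom.toAlgebra
  let : Algebra P S := (ψ.comp g).toRingHom.toAlgebra
  have : IsScalarTower P A S := IsScalarTower.of_algebraMap_eq fun _ => rfl
  have : IsScalarTower ℂ P A := IsScalarTower.of_algebraMap_eq fun r => (g.commutes r).symm
  have : IsScalarTower ℂ A S := IsScalarTower.of_algebraMap_eq fun r => (ψ.commutes r).symm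
  have : Module.Finite P A := hgfin
  have := flat_mvPowerSeries (Fin d)
  have : IsNoetherianRing S := Algebra.FiniteType.isNoetherianRing ℂ S
  have hQ : ∀ i, algebraMap P S (MvPolynomial.X i) ∈ Q := hgQ
  obtain ⟨φ, hφ⟩ := exists_eval_completion (A := A) Q hQ
  obtain ⟨u, huu, hu0, δ, hδ, hδu⟩ := exists_idempotent_completion hg hψ hQ hφ
  have hφa : ∀ n (x : A), φ n (algebraMap A _ x) = Ideal.Quotient.mk (Q ^ n) (ψ x) :=
    fun n x => (φ n).commutes x
  -- the idempotent does not vanish at the closed point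
  have hu1 : φ 1 u ≠ 0 := by
    intro h1
    have h2 : ∀ n, φ n u = 0 := by
      intro n
      rcases n.eq_zero_or_pos with rfl | hn
      · have : Subsingleton (S ⧸ Q ^ 0) := Ideal.Quotient.subsingleton_iff.2 (by simp)
        exact Subsingleton.elim _ _
      obtain ⟨s, hs⟩ := Ideal.Quotient.mk_surjective (φ n u)
      have h3 := eval_transition hQ hφ hn u hs.symm
      rw [h1, eq_comm, Ideal.Quotient.eq_zero_iff_mem, pow_one] at h3
      have h4 : IsIdempotentElem (φ n u) := by
        rw [IsIdempotentElem, ← map_mul, huu]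
      rw [← h4.pow_eq hn.ne', ← hs, ← map_pow, Ideal.Quotient.eq_zero_iff_mem]
      exact Ideal.pow_mem_pow h3 n
    have h5 : u = 0 := by rw [← huu, hu0 u h2]
    have h6 : ψ δ ∈ (⨅ n, Q ^ n : Ideal S) := by
      rw [Submodule.mem_iInf]
      intro n
      have := hδu n
      rwa [h5, sub_zero, mul_one, hφa, Ideal.Quotient.eq_zero_iff_mem] at this
    rw [Ideal.iInf_pow_eq_bot_of_isDomain Q (Ideal.IsPrime.ne_top inferInstance),
      Ideal.mem_bot, map_eq_zero_iff ψ hψ] at h6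
    exact hδ h6
  obtain ⟨β, hβ⟩ := exists_completion_of_approx hQ hφ b happ
  have hrel : algebraMap A _ a * u = algebraMap A _ h * (u * β) := by
    have h1 := hu0 (algebraMap A _ a - algebraMap A _ h * β) fun n => by
      rw [map_sub, map_mul, hφa, hφa, hβ, ← map_mul, e, sub_self]
    linear_combination h1
  obtain ⟨k, s, z, hz, hdvd⟩ := exists_dvd_of_algebraMap_mul_eq hrel
  obtain ⟨j, hj⟩ : ∃ j, ψ (s j) ∉ Q := by
    by_contra! hall
    refine hu1 ?_
    rw [hz, map_sum]
    refine Finset.sum_eq_zero fun j _ => ?_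
    rw [map_mul, hφa, Ideal.Quotient.eq_zero_iff_mem.2 (by simpa using hall j),
      zero_mul]
  obtain ⟨a', ha'⟩ := hdvd j
  exact ⟨s j, hj, a', by rw [mul_comm, ha', mul_comm]⟩

end

/-! ### The exceptional divisor -/

lemma Ideal.heightOf_eq_height {R : Type*} [CommRing R] (p : Ideal R) [hp : p.IsPrime] :
    p.heightOf = p.height := by
  rw [Ideal.heightOf, show p.height = _ from PrimeSpectrum.height_eq_orderHeight ⟨p, hp⟩]
  refine le_antisymm (iInf₂_le (⟨p, hp⟩ : PrimeSpectrum R) (le_refl p)) ?_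
  refine le_iInf₂ fun q hq => ?_
  exact Order.height_mono (show (⟨p, hp⟩ : PrimeSpectrum R) ≤ q from hq)

/-- Let `R`, `S` be affine domains over `ℂ`, `ι : R → S` an injective `ℂ`-algebra
homomorphism, and `R` integrally closed in its fraction field.  Let `F : S → S` be a
bijective `ℂ`-algebra homomorphism and `G : R → R` a `ℂ`-algebra homomorphism with
`ι ∘ G = F ∘ ι`.  If `G` is not bijective, then there is a height-one prime `p` of `R`
whose preimage `G⁻¹(p)` has height at least 2 and whose image `ι(p)` generates the unit
ideal of `S`. -/
theorem exists_exceptional_divisor_avoiding_image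
    {R S : Type*} [CommRing R] [IsDomain R] [CommRing S] [IsDomain S]
    [Algebra ℂ R] [Algebra ℂ S] [Algebra.FiniteType ℂ R] [Algebra.FiniteType ℂ S]
    [IsIntegrallyClosed R]
    (ι : R →ₐ[ℂ] S) (hι : Function.Injective ι)
    (F : S →ₐ[ℂ] S) (hF : Function.Bijective F)
    (G : R →ₐ[ℂ] R) (hcomm : ∀ r, ι (G r) = F (ι r))
    (hG : ¬ Function.Bijective G) :
    ∃ p : Ideal R, p.IsPrime ∧ p.heightOf = 1 ∧
      2 ≤ (Ideal.comap G p).heightOf ∧ Ideal.map ι p = ⊤ := by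
  have hGi : Function.Injective G := by
    intro x y h
    apply hι
    apply hF.1
    rw [← hcomm, ← hcomm, h]
  obtain ⟨p, hp, h1, h2⟩ := exists_exceptional ι hι F hF G hcomm fun h => hG ⟨hGi, h⟩
  have hP := hp.comap G
  refine ⟨p, hp, by rwa [Ideal.heightOf_eq_height], by rwa [Ideal.heightOf_eq_height], ?_⟩
  by_contra hne
  obtain ⟨Q, hQ, hle⟩ := Ideal.exists_le_maximal _ hne
  have key : ∀ b, ∃ s ∉ p.comap (G : R →+* R), ∃ a, G s * b = G a := by
    intro b
    obtain ⟨h, a, hh, e⟩ := birational ι hι F hF G hcomm hGi b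
    obtain ⟨s, hs, a', e'⟩ := unramified_step (ι.comp G) (hι.comp hGi) Q (ι b) h a
      (by simp [← map_mul, e]) (fun n => exists_approx ι F hF G hcomm Q n b)
    refine ⟨s, fun hsp => hs (hle (Ideal.mem_map_of_mem ι hsp)), a', ?_⟩
    have hGh : G h ≠ 0 := by rwa [ne_eq, map_eq_zero_iff G hGi]
    apply mul_left_cancel₀ hGh
    have := congrArg G e'
    simp only [map_mul] at this
    linear_combination G s * e + this
  have := height_comap_eq_of_forall (G : R →+* R) hGi p key
  rw [h1] at this
  have h2' : 2 ≤ (p.comap (G : R →+* R)).height := h2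
  rw [this] at h2'
  norm_num at h2'
end
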